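/- arXiv:1004.5146 — 2 statements merged into one kernel-verified Lean document; each statement's English description precedes it below -/
import Mathlib

section
/- Let $1<\alpha<2$, $n\geq 2$ and let $\Pi=\mathbb{R}^{n-1}\times(0,\infty)$ be the upper half-space. There exists a constant $c=c(\alpha,n)>0$ such that for every continuous function $u$ with compact support in $\Pi$, $\mathcal{E}_{\Pi}(u) \geq \kappa_{n,\alpha}\int_{\Pi} u^2(x)\, x_n^{-\alpha}\,dx + c\left(\int_{\Pi}|u(x)|^{2^*}\,dx\right)^{2/2^*}$, where $x_n$ denotes the last coordinate of $x$ and $2^*=2n/(n-\alpha)$. -/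
open MeasureTheory Metric Set Filter
open scoped ENNReal Topology

/-- The Euler beta function. -/
noncomputable def eulerBeta (a b : ℝ) : ℝ :=
  Real.Gamma a * Real.Gamma b / Real.Gamma (a + b)

/-- The sharp fractional Hardy constant `κ_{n,α}`. -/
noncomputable def kappa (n : ℕ) (α : ℝ) : ℝ :=
  Real.pi ^ (((n : ℝ) - 1) / 2) * (Real.Gamma ((1 + α) / 2) / Real.Gamma ((n + α) / 2)) *
    ((eulerBeta ((1 + α) / 2) ((2 - α) / 2) - 2 ^ α) / (α * 2 ^ α))

/-- The quadratic form `𝓔_D(u)`, valued in `[0,∞]`. -/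
noncomputable def energy (n : ℕ) (α : ℝ) (D : Set (EuclideanSpace ℝ (Fin n)))
    (u : EuclideanSpace ℝ (Fin n) → ℝ) : ℝ≥0∞ :=
  (1 / 2 : ℝ≥0∞) * ∫⁻ x in D, ∫⁻ y in D,
    ENNReal.ofReal ((u x - u y) ^ 2 / ‖x - y‖ ^ ((n : ℝ) + α))

/-!
Write `x` for the height over the boundary hyperplane and `h = x ^ β` with `β = (α - 1) / 2`. On the
pairs of points whose height ratio is less than some `l < 1`, the ground state substitution
`u = h v` turns `(u p - u q)²` into `h p h q (v p - v q)²` plus a Hardy term. The truncation makes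
all integrals finite, so the terms that diverge as `l → 1` can be rearranged before passing to the
limit; the energy then dominates the sharp Hardy term plus the energy of `v` with weight
`h p h q`.

That remainder controls the Sobolev norm because only pairs with `q` above `p` enter, where the
weight increases: in a ball lying above `p`, of radius tied to `|u p|` and to `∫ |u| ^ 2^*`,
Chebyshev's inequality gives `|u q| ≤ |u p| / 2` on at least half of the volume, so the interaction
of `p` with that ball is at least a multiple of `|u p| ^ 2^*`.
-/

/-! ### Integrals over Euclidean space -/

theorem lintegral_ofReal_eq_of_integral_eq_pos {X : Type*} [MeasurableSpace X] {μ : Measure X}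
    {f : X → ℝ} {c : ℝ} (hf : 0 ≤ᵐ[μ] f) (hc : 0 < c) (h : ∫ x, f x ∂μ = c) :
    ∫⁻ x, ENNReal.ofReal (f x) ∂μ = ENNReal.ofReal c := by
  have hint : Integrable f μ := .of_integral_ne_zero (h ▸ hc.ne')
  rw [← ofReal_integral_eq_lintegral_ofReal hint hf, h]

theorem lintegral_rpow_mul_exp_neg_mul_Ioi {s a : ℝ} (hs : 0 < s) (ha : 0 < a) :
    ∫⁻ τ in Ioi (0 : ℝ), ENNReal.ofReal (τ ^ (s - 1) * Real.exp (-(a * τ))) =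
      ENNReal.ofReal (a ^ (-s) * Real.Gamma s) := by
  refine lintegral_ofReal_eq_of_integral_eq_pos ?_
    (mul_pos (by positivity) (Real.Gamma_pos_of_pos hs)) ?_
  · filter_upwards [ae_restrict_mem measurableSet_Ioi] with τ (hτ : 0 < τ)
    exact mul_nonneg (by positivity) (Real.exp_nonneg _)
  · rw [Real.integral_rpow_mul_exp_neg_mul_Ioi hs ha, one_div, Real.inv_rpow ha.le,
      Real.rpow_neg ha.le]

section Transversal

variable {V : Type*} [NormedAddCommGroup V] [InnerProductSpace ℝ V] [FiniteDimensional ℝ V]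
  [MeasurableSpace V] [BorelSpace V]

theorem lintegral_exp_neg_mul_sq_norm {τ : ℝ} (hτ : 0 < τ) :
    ∫⁻ z : V, ENNReal.ofReal (Real.exp (-τ * ‖z‖ ^ 2)) =
      ENNReal.ofReal ((Real.pi / τ) ^ (Module.finrank ℝ V / 2 : ℝ)) :=
  lintegral_ofReal_eq_of_integral_eq_pos (.of_forall fun _ => Real.exp_nonneg _) (by positivity)
    (GaussianFourier.integral_rexp_neg_mul_sq_norm hτ)

variable (V) in
theorem lintegral_rpow_sq_add_sq_norm_mul_Gamma {s a : ℝ} (hs : (Module.finrank ℝ V / 2 : ℝ) < s)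
    (ha : 0 < a) :
    (∫⁻ z : V, ENNReal.ofReal ((a + ‖z‖ ^ 2) ^ (-s))) * ENNReal.ofReal (Real.Gamma s) =
      ENNReal.ofReal (Real.pi ^ (Module.finrank ℝ V / 2 : ℝ) *
        (a ^ (-(s - Module.finrank ℝ V / 2)) * Real.Gamma (s - Module.finrank ℝ V / 2))) := by
  set d : ℝ := Module.finrank ℝ V / 2 with hd
  have hs0 : 0 < s := hs.trans_le' (by positivity)
  have integral_gauss (τ : ℝ) (hτ : 0 < τ) :
      ∫⁻ z : V, ENNReal.ofReal (τ ^ (s - 1) * Real.exp (-((a + ‖z‖ ^ 2) * τ))) =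
        ENNReal.ofReal (Real.pi ^ d) *
          ENNReal.ofReal (τ ^ (s - d - 1) * Real.exp (-(a * τ))) := by
    have split_exp (z : V) : ENNReal.ofReal (τ ^ (s - 1) * Real.exp (-((a + ‖z‖ ^ 2) * τ))) =
        ENNReal.ofReal (τ ^ (s - 1) * Real.exp (-(a * τ))) *
          ENNReal.ofReal (Real.exp (-τ * ‖z‖ ^ 2)) := by
      rw [← ENNReal.ofReal_mul (by positivity), mul_assoc, ← Real.exp_add]
      ring_nf
    simp only [split_exp]
    rw [lintegral_const_mul' _ _ ENNReal.ofReal_ne_top, lintegral_exp_neg_mul_sq_norm hτ, ← hd,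
      ← ENNReal.ofReal_mul (by positivity), ← ENNReal.ofReal_mul (by positivity),
      Real.div_rpow Real.pi_pos.le hτ.le, sub_right_comm, Real.rpow_sub hτ (s - 1) d]
    ring_nf
  calc (∫⁻ z : V, ENNReal.ofReal ((a + ‖z‖ ^ 2) ^ (-s))) * ENNReal.ofReal (Real.Gamma s)
      = ∫⁻ z : V, ∫⁻ τ in Ioi (0 : ℝ),
          ENNReal.ofReal (τ ^ (s - 1) * Real.exp (-((a + ‖z‖ ^ 2) * τ))) := by
        rw [← lintegral_mul_const' _ _ ENNReal.ofReal_ne_top]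
        refine lintegral_congr fun z => ?_
        rw [lintegral_rpow_mul_exp_neg_mul_Ioi hs0 (by positivity),
          ENNReal.ofReal_mul (by positivity)]
    _ = ∫⁻ τ in Ioi (0 : ℝ), ∫⁻ z : V,
          ENNReal.ofReal (τ ^ (s - 1) * Real.exp (-((a + ‖z‖ ^ 2) * τ))) :=
        lintegral_lintegral_swap (by unfold Function.uncurry; fun_prop)
    _ = ENNReal.ofReal (Real.pi ^ d) *
          ∫⁻ τ in Ioi (0 : ℝ), ENNReal.ofReal (τ ^ (s - d - 1) * Real.exp (-(a * τ))) := by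
        rw [← lintegral_const_mul' _ _ ENNReal.ofReal_ne_top]
        exact setLIntegral_congr_fun measurableSet_Ioi integral_gauss
    _ = _ := by
        rw [lintegral_rpow_mul_exp_neg_mul_Ioi (sub_pos.mpr hs) ha,
          ← ENNReal.ofReal_mul (by positivity)]

variable (V) in
theorem lintegral_rpow_sq_add_sq_norm {s t : ℝ} (hs : (Module.finrank ℝ V / 2 : ℝ) < s)
    (ht : 0 < t) :
    ∫⁻ z : V, ENNReal.ofReal ((t ^ 2 + ‖z‖ ^ 2) ^ (-s)) =
      ENNReal.ofReal (Real.pi ^ (Module.finrank ℝ V / 2 : ℝ) *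
        (Real.Gamma (s - Module.finrank ℝ V / 2) / Real.Gamma s) *
          t ^ (Module.finrank ℝ V - 2 * s)) := by
  have hΓ : 0 < Real.Gamma s := Real.Gamma_pos_of_pos (hs.trans_le' (by positivity))
  have ht2 : (t ^ 2) ^ (-(s - Module.finrank ℝ V / 2)) = t ^ (Module.finrank ℝ V - 2 * s) := by
    rw [← Real.rpow_natCast_mul ht.le]
    push_cast
    ring_nf
  rw [← ENNReal.mul_left_inj (ENNReal.ofReal_pos.mpr hΓ).ne' ENNReal.ofReal_ne_top,
    lintegral_rpow_sq_add_sq_norm_mul_Gamma V hs (by positivity), ht2, ← ENNReal.ofReal_mul' hΓ.le]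
  field_simp

end Transversal

theorem lintegral_eq_lintegral_insertNth {m : ℕ} (i : Fin (m + 1))
    {f : EuclideanSpace ℝ (Fin (m + 1)) → ℝ≥0∞} (hf : Measurable f) :
    ∫⁻ y, f y = ∫⁻ s : ℝ, ∫⁻ z : EuclideanSpace ℝ (Fin m),
      f (WithLp.toLp 2 (i.insertNth (α := fun _ => ℝ) s z.ofLp)) := by
  have hmp := (volume_preserving_piFinSuccAbove (fun _ : Fin (m + 1) => ℝ) i).comp
    (EuclideanSpace.volume_preserving_symm_measurableEquiv_toLp (Fin (m + 1)))
  have hmp' := EuclideanSpace.volume_preserving_symm_measurableEquiv_toLp (Fin m)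
  have hmeas : Measurable fun p : ℝ × (Fin m → ℝ) =>
      f (WithLp.toLp 2 (i.insertNth (α := fun _ => ℝ) p.1 p.2)) :=
    hf.comp <| (MeasurableEquiv.toLp 2 (Fin (m + 1) → ℝ)).measurable.comp
      (MeasurableEquiv.piFinSuccAbove (fun _ : Fin (m + 1) => ℝ) i).symm.measurable
  calc ∫⁻ y, f y = ∫⁻ p : ℝ × (Fin m → ℝ),
        f (WithLp.toLp 2 (i.insertNth (α := fun _ => ℝ) p.1 p.2)) := by
        rw [← hmp.lintegral_comp hmeas]
        refine lintegral_congr fun y => congrArg f (PiLp.ext fun j => ?_)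
        exact (congrFun ((Fin.insertNthEquiv (fun _ => ℝ) i).apply_symm_apply y.ofLp) j).symm
    _ = ∫⁻ s : ℝ, ∫⁻ z : Fin m → ℝ,
        f (WithLp.toLp 2 (i.insertNth (α := fun _ => ℝ) s z)) := by
        rw [Measure.volume_eq_prod, lintegral_prod _ hmeas.aemeasurable]
    _ = _ := lintegral_congr fun s =>
        (hmp'.lintegral_comp (f := fun z =>
          f (WithLp.toLp 2 (i.insertNth (α := fun _ => ℝ) s z)))
          (hmeas.comp measurable_prodMk_left)).symm

/-! ### The jump kernel on a half-space -/

/-- The open half-space of points whose `i`-th coordinate, their height, is positive. -/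
abbrev halfSpace {n : ℕ} (i : Fin n) : Set (EuclideanSpace ℝ (Fin n)) := {x | 0 < x i}

/-- The jump kernel `|x - y| ^ (-n - α)` of the fractional form, valued in `[0,∞]`. -/
noncomputable def jumpKernel {n : ℕ} (α : ℝ) (x y : EuclideanSpace ℝ (Fin n)) : ℝ≥0∞ :=
  ENNReal.ofReal (‖x - y‖ ^ (-((n : ℝ) + α)))

/-- The factor of `κ_{n,α}` that appears when the jump kernel in dimension `n` is integrated
over a hyperplane and becomes the jump kernel in dimension `1`. -/
noncomputable def transversalConst (n : ℕ) (α : ℝ) : ℝ :=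
  Real.pi ^ (((n : ℝ) - 1) / 2) * (Real.Gamma ((1 + α) / 2) / Real.Gamma ((n + α) / 2))

/-- The integral `∫ u² x_i ^ (-α)` over the half-space, valued in `[0,∞]`. -/
noncomputable def hardyIntegral {n : ℕ} (i : Fin n) (α : ℝ)
    (u : EuclideanSpace ℝ (Fin n) → ℝ) : ℝ≥0∞ :=
  ∫⁻ x in halfSpace i, ENNReal.ofReal (u x ^ 2) * ENNReal.ofReal (x i ^ (-α))

section HalfSpace

variable {n : ℕ} {α : ℝ}

theorem measurableSet_halfSpace (i : Fin n) : MeasurableSet (halfSpace i) :=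
  measurableSet_lt measurable_const (by fun_prop)

@[fun_prop]
theorem measurable_jumpKernel {X : Type*} [MeasurableSpace X] {f g : X → EuclideanSpace ℝ (Fin n)}
    (hf : Measurable f) (hg : Measurable g) : Measurable fun a => jumpKernel α (f a) (g a) := by
  unfold jumpKernel
  fun_prop

theorem jumpKernel_comm (x y : EuclideanSpace ℝ (Fin n)) :
    jumpKernel α x y = jumpKernel α y x := by
  rw [jumpKernel, norm_sub_rev, jumpKernel]

theorem transversalConst_nonneg (hα : -1 < α) (hn : 1 ≤ n) : 0 ≤ transversalConst n α := by
  have hn' : (1 : ℝ) ≤ n := by exact_mod_cast hn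
  exact mul_nonneg (by positivity) (div_nonneg (Real.Gamma_pos_of_pos (by linarith)).le
    (Real.Gamma_pos_of_pos (by linarith)).le)

theorem norm_sub_toLp_insertNth_sq {m : ℕ} (i : Fin (m + 1))
    (x : EuclideanSpace ℝ (Fin (m + 1))) (s : ℝ) (z : EuclideanSpace ℝ (Fin m)) :
    ‖x - WithLp.toLp 2 (i.insertNth (α := fun _ => ℝ) s z.ofLp)‖ ^ 2 =
      |x i - s| ^ 2 + ‖z - WithLp.toLp 2 fun j => x (i.succAbove j)‖ ^ 2 := by
  rw [EuclideanSpace.norm_sq_eq, EuclideanSpace.norm_sq_eq, Fin.sum_univ_succAbove _ i]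
  simp [abs_sub_comm]

theorem jumpKernel_toLp_insertNth {m : ℕ} (i : Fin (m + 1)) (x : EuclideanSpace ℝ (Fin (m + 1)))
    (s : ℝ) (z : EuclideanSpace ℝ (Fin m)) :
    jumpKernel α x (WithLp.toLp 2 (i.insertNth (α := fun _ => ℝ) s z.ofLp)) =
      ENNReal.ofReal ((|x i - s| ^ 2 + ‖z - WithLp.toLp 2 fun j => x (i.succAbove j)‖ ^ 2) ^
        (-((m + 1 + α) / 2))) := by
  rw [jumpKernel, ← norm_sub_toLp_insertNth_sq, ← Real.rpow_natCast_mul (norm_nonneg _)]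
  push_cast
  ring_nf

theorem lintegral_jumpKernel_toLp_insertNth {m : ℕ} (i : Fin (m + 1)) (hα : -1 < α)
    (x : EuclideanSpace ℝ (Fin (m + 1))) {s : ℝ} (hs : s ≠ x i) :
    ∫⁻ z : EuclideanSpace ℝ (Fin m),
        jumpKernel α x (WithLp.toLp 2 (i.insertNth (α := fun _ => ℝ) s z.ofLp)) =
      ENNReal.ofReal (transversalConst (m + 1) α) * ENNReal.ofReal (|x i - s| ^ (-1 - α)) := by
  have ht : 0 < |x i - s| := abs_pos.mpr (sub_ne_zero.mpr hs.symm)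
  have hfin : (Module.finrank ℝ (EuclideanSpace ℝ (Fin m)) : ℝ) = m := by simp
  simp only [jumpKernel_toLp_insertNth]
  rw [lintegral_sub_right_eq_self fun z : EuclideanSpace ℝ (Fin m) =>
      ENNReal.ofReal ((|x i - s| ^ 2 + ‖z‖ ^ 2) ^ (-((m + 1 + α) / 2))),
    lintegral_rpow_sq_add_sq_norm _ (by rw [hfin]; linarith) ht, hfin,
    ← ENNReal.ofReal_mul (transversalConst_nonneg hα (by omega)), transversalConst]
  push_cast
  ring_nf

theorem lintegral_mul_jumpKernel (i : Fin n) (hα : -1 < α) {g : ℝ → ℝ≥0∞} (hg : Measurable g)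
    (x : EuclideanSpace ℝ (Fin n)) :
    ∫⁻ y, g (y i) * jumpKernel α x y =
      ENNReal.ofReal (transversalConst n α) *
        ∫⁻ s, g s * ENNReal.ofReal (|x i - s| ^ (-1 - α)) := by
  obtain _ | m := n
  · exact i.elim0
  have hline : ∀ᵐ s : ℝ, s ≠ x i := by simp [ae_iff]
  rw [lintegral_eq_lintegral_insertNth i (by fun_prop),
    ← lintegral_const_mul' _ _ ENNReal.ofReal_ne_top]
  refine lintegral_congr_ae ?_
  filter_upwards [hline] with s hs
  have hks : Measurable fun z : EuclideanSpace ℝ (Fin m) =>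
      jumpKernel α x (WithLp.toLp 2 (i.insertNth (α := fun _ => ℝ) s z.ofLp)) := by
    simp only [jumpKernel_toLp_insertNth]
    fun_prop
  simp only [Fin.insertNth_apply_same]
  rw [lintegral_const_mul _ hks, lintegral_jumpKernel_toLp_insertNth i hα x hs, mul_left_comm]

theorem setLIntegral_halfSpace_mul_jumpKernel (i : Fin n) (hα : -1 < α) {g : ℝ → ℝ≥0∞}
    (hg : Measurable g) (x : EuclideanSpace ℝ (Fin n)) :
    ∫⁻ y in halfSpace i, g (y i) * jumpKernel α x y =
      ENNReal.ofReal (transversalConst n α) *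
        ∫⁻ s in Ioi 0, g s * ENNReal.ofReal (|x i - s| ^ (-1 - α)) := by
  have h := lintegral_mul_jumpKernel i hα (hg.indicator (measurableSet_Ioi (a := (0 : ℝ)))) x
  rw [← lintegral_indicator measurableSet_Ioi, ← lintegral_indicator (measurableSet_halfSpace i)]
  simpa only [indicator_apply, mem_Ioi, mem_ofPred_eq, ite_mul, zero_mul] using h

end HalfSpace

/-! ### Scaling of one-dimensional integrals -/

section Scaling

variable {α a : ℝ} (g : ℝ → ℝ≥0∞)

theorem setLIntegral_Ioi_comp_div_mul (hα : α ≠ 0) (ha : 0 < a) :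
    ∫⁻ s in Ioi 0, g (s / a) * ENNReal.ofReal (|a - s| ^ (-1 - α)) =
      ENNReal.ofReal (a ^ (-α)) * ∫⁻ t in Ioi 0, g t * ENNReal.ofReal (|1 - t| ^ (-1 - α)) := by
  have image_Ioi : (· * a) '' Ioi (0 : ℝ) = Ioi 0 := by
    simpa using (OrderIso.mulRight₀ a ha).image_Ioi 0
  rw [← image_Ioi, lintegral_image_eq_lintegral_abs_deriv_mul (f' := fun _ => a) measurableSet_Ioi
    (fun x _ => by simpa using ((hasDerivAt_id x).mul_const a).hasDerivWithinAt)
    (mul_left_injective₀ ha.ne').injOn, image_Ioi, ← lintegral_const_mul' _ _ ENNReal.ofReal_ne_top]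
  refine lintegral_congr fun t => ?_
  have hscale : a * |a - t * a| ^ (-1 - α) = a ^ (-α) * |1 - t| ^ (-1 - α) := by
    rw [← one_sub_mul, abs_mul, abs_of_pos ha, Real.mul_rpow (abs_nonneg _) ha.le, mul_left_comm,
      ← Real.rpow_one_add' ha.le fun h => hα (by linarith), mul_comm]
    ring_nf
  rw [mul_div_cancel_right₀ _ ha.ne', abs_of_pos ha, mul_left_comm,
    ← ENNReal.ofReal_mul ha.le, hscale, ENNReal.ofReal_mul (by positivity), mul_left_comm]

theorem setLIntegral_Ioi_comp_inv_mul :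
    ∫⁻ t in Ioi 0, g t⁻¹ * ENNReal.ofReal (|1 - t| ^ (-1 - α)) =
      ∫⁻ t in Ioi 0, g t * ENNReal.ofReal (t ^ (α - 1) * |1 - t| ^ (-1 - α)) := by
  have image_Ioi : Inv.inv '' Ioi (0 : ℝ) = Ioi 0 := by
    rw [image_inv_eq_inv]
    ext t
    simp
  conv_lhs => rw [← image_Ioi]
  rw [lintegral_image_eq_lintegral_abs_deriv_mul measurableSet_Ioi
    (fun t (ht : 0 < t) => (hasDerivAt_inv ht.ne').hasDerivWithinAt) inv_injective.injOn]
  refine setLIntegral_congr_fun measurableSet_Ioi fun t (ht : 0 < t) => ?_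
  have hinv : |1 - t⁻¹| = |1 - t| * t⁻¹ := by
    rw [← abs_of_pos (inv_pos.mpr ht), ← abs_mul, abs_of_pos (inv_pos.mpr ht), sub_mul,
      mul_inv_cancel₀ ht.ne', one_mul, abs_sub_comm]
  have hpow : (t ^ 2)⁻¹ * t⁻¹ ^ (-1 - α) = t ^ (α - 1) := by
    rw [← Real.rpow_natCast, ← Real.rpow_neg ht.le, Real.inv_rpow ht.le, ← Real.rpow_neg ht.le,
      ← Real.rpow_add ht]
    push_cast
    ring_nf
  simp only [inv_inv, abs_neg]
  rw [mul_left_comm, abs_of_pos (by positivity), ← ENNReal.ofReal_mul (by positivity), hinv,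
    Real.mul_rpow (abs_nonneg _) (by positivity), mul_left_comm, hpow, mul_comm (_ ^ (-1 - α))]

theorem setLIntegral_Ioi_comp_div_left_mul (hα : α ≠ 0) (ha : 0 < a) :
    ∫⁻ s in Ioi 0, g (a / s) * ENNReal.ofReal (|a - s| ^ (-1 - α)) =
      ENNReal.ofReal (a ^ (-α)) *
        ∫⁻ t in Ioi 0, g t * ENNReal.ofReal (t ^ (α - 1) * |1 - t| ^ (-1 - α)) := by
  rw [← setLIntegral_Ioi_comp_inv_mul, ← setLIntegral_Ioi_comp_div_mul _ hα ha]
  simp only [inv_div]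

end Scaling

/-! ### Integrals over pairs of points of the half-space -/

section Pairs

variable {n : ℕ} {α : ℝ} (i : Fin n)

/-- Pairs of points of the half-space whose heights have a ratio smaller than `l`. -/
def ratioPairs (l : ℝ) : Set (EuclideanSpace ℝ (Fin n) × EuclideanSpace ℝ (Fin n)) :=
  (halfSpace i ×ˢ halfSpace i) ∩ {p | p.1 i / p.2 i < l}

theorem measurableSet_ratioPairs (l : ℝ) : MeasurableSet (ratioPairs i l) :=
  ((measurableSet_halfSpace i).prod (measurableSet_halfSpace i)).inter
    (measurableSet_lt (by fun_prop) measurable_const)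

theorem monotone_ratioPairs : Monotone (ratioPairs i) :=
  fun _ _ hl _ hp => ⟨hp.1, hp.2.trans_le hl⟩

variable {i}

variable {u : EuclideanSpace ℝ (Fin n) → ℝ} {g : ℝ → ℝ≥0∞}

theorem setLIntegral_halfSpace_prod_snd (hα : 0 < α) (hu : Measurable u) (hg : Measurable g) :
    ∫⁻ p in halfSpace i ×ˢ halfSpace i,
        g (p.1 i / p.2 i) * (ENNReal.ofReal (u p.2 ^ 2) * jumpKernel α p.1 p.2) =
      hardyIntegral i α u * (ENNReal.ofReal (transversalConst n α) *
        ∫⁻ t in Ioi 0, g t * ENNReal.ofReal (|1 - t| ^ (-1 - α))) := by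
  rw [Measure.volume_eq_prod, setLIntegral_prod_symm _ (by fun_prop), hardyIntegral,
    ← lintegral_mul_const _ (by fun_prop)]
  refine setLIntegral_congr_fun (measurableSet_halfSpace i) fun y (hy : 0 < y i) => ?_
  simp only [mul_left_comm (g _), jumpKernel_comm _ y]
  rw [lintegral_const_mul' _ _ ENNReal.ofReal_ne_top,
    setLIntegral_halfSpace_mul_jumpKernel (g := fun s => g (s / y i)) i (by linarith)
      (by fun_prop), setLIntegral_Ioi_comp_div_mul _ hα.ne' hy]
  ring

theorem setLIntegral_halfSpace_prod_fst (hα : 0 < α) (hu : Measurable u) (hg : Measurable g) :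
    ∫⁻ p in halfSpace i ×ˢ halfSpace i,
        g (p.1 i / p.2 i) * (ENNReal.ofReal (u p.1 ^ 2) * jumpKernel α p.1 p.2) =
      hardyIntegral i α u * (ENNReal.ofReal (transversalConst n α) *
        ∫⁻ t in Ioi 0, g t * ENNReal.ofReal (t ^ (α - 1) * |1 - t| ^ (-1 - α))) := by
  rw [Measure.volume_eq_prod, setLIntegral_prod _ (by fun_prop), hardyIntegral,
    ← lintegral_mul_const _ (by fun_prop)]
  refine setLIntegral_congr_fun (measurableSet_halfSpace i) fun x (hx : 0 < x i) => ?_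
  simp only [mul_left_comm (g _)]
  rw [lintegral_const_mul' _ _ ENNReal.ofReal_ne_top,
    setLIntegral_halfSpace_mul_jumpKernel (g := fun s => g (x i / s)) i (by linarith)
      (by fun_prop), setLIntegral_Ioi_comp_div_left_mul _ hα.ne' hx]
  ring

theorem setLIntegral_ratioPairs_eq (l : ℝ)
    (f : EuclideanSpace ℝ (Fin n) × EuclideanSpace ℝ (Fin n) → ℝ≥0∞) (g : ℝ → ℝ≥0∞) :
    ∫⁻ p in ratioPairs i l, g (p.1 i / p.2 i) * f p =
      ∫⁻ p in halfSpace i ×ˢ halfSpace i, (Iio l).indicator g (p.1 i / p.2 i) * f p := by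
  have hr : MeasurableSet {p : EuclideanSpace ℝ (Fin n) × EuclideanSpace ℝ (Fin n) |
    p.1 i / p.2 i < l} := measurableSet_lt (by fun_prop) measurable_const
  rw [ratioPairs, inter_comm, ← setLIntegral_indicator hr]
  simp only [indicator_apply, mem_ofPred_eq, mem_Iio, ite_mul, zero_mul]

theorem setLIntegral_ratioPairs_snd (hα : 0 < α) (hu : Measurable u) (hg : Measurable g) (l : ℝ) :
    ∫⁻ p in ratioPairs i l,
        g (p.1 i / p.2 i) * (ENNReal.ofReal (u p.2 ^ 2) * jumpKernel α p.1 p.2) =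
      hardyIntegral i α u * (ENNReal.ofReal (transversalConst n α) *
        ∫⁻ t in Ioo 0 l, g t * ENNReal.ofReal (|1 - t| ^ (-1 - α))) := by
  rw [setLIntegral_ratioPairs_eq, setLIntegral_halfSpace_prod_snd hα hu
    (hg.indicator measurableSet_Iio), ← Iio_inter_Ioi, ← setLIntegral_indicator measurableSet_Iio]
  simp only [indicator_mul_left]

theorem setLIntegral_ratioPairs_fst (hα : 0 < α) (hu : Measurable u) (hg : Measurable g) (l : ℝ) :
    ∫⁻ p in ratioPairs i l,
        g (p.1 i / p.2 i) * (ENNReal.ofReal (u p.1 ^ 2) * jumpKernel α p.1 p.2) =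
      hardyIntegral i α u * (ENNReal.ofReal (transversalConst n α) *
        ∫⁻ t in Ioo 0 l, g t * ENNReal.ofReal (t ^ (α - 1) * |1 - t| ^ (-1 - α))) := by
  rw [setLIntegral_ratioPairs_eq, setLIntegral_halfSpace_prod_fst hα hu
    (hg.indicator measurableSet_Iio), ← Iio_inter_Ioi, ← setLIntegral_indicator measurableSet_Iio]
  simp only [indicator_mul_left]

end Pairs

/-! ### The one-dimensional Hardy constant -/

/-- The part over `(0, l)` of the one-dimensional Hardy constant belonging to the ground state
`t ^ β`; the full constant is the value at `l = 1`. -/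
noncomputable def truncatedHardyConst (α β l : ℝ) : ℝ≥0∞ :=
  ∫⁻ t in Ioo 0 l, ENNReal.ofReal ((1 - t ^ β) * (1 - t ^ (α - 1 - β)) * (1 - t) ^ (-1 - α))

section Truncated

variable {α β l : ℝ}

theorem lintegral_one_sub_rpow_eq_add_truncatedHardyConst (hβ : 0 ≤ β) (hβα : β ≤ α - 1)
    (hl : l ≤ 1) :
    ∫⁻ t in Ioo 0 l, ENNReal.ofReal (1 - t ^ β) * ENNReal.ofReal (|1 - t| ^ (-1 - α)) =
      (∫⁻ t in Ioo 0 l, ENNReal.ofReal (t ^ (-β) - 1) *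
        ENNReal.ofReal (t ^ (α - 1) * |1 - t| ^ (-1 - α))) + truncatedHardyConst α β l := by
  rw [truncatedHardyConst, ← lintegral_add_left (by fun_prop)]
  refine setLIntegral_congr_fun measurableSet_Ioo fun t ht => ?_
  have ht0 : 0 < t := ht.1
  have ht1 : t < 1 := ht.2.trans_le hl
  have h1t : 0 < 1 - t := sub_pos.mpr ht1
  have hβ1 : 0 ≤ 1 - t ^ β := sub_nonneg.mpr (Real.rpow_le_one ht0.le ht1.le hβ)
  have hγ1 : 0 ≤ 1 - t ^ (α - 1 - β) :=
    sub_nonneg.mpr (Real.rpow_le_one ht0.le ht1.le (by linarith))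
  have hβ2 : 0 ≤ t ^ (-β) - 1 :=
    sub_nonneg.mpr (Real.one_le_rpow_of_pos_of_le_one_of_nonpos ht0 ht1.le (by linarith))
  have hγ : t ^ (α - 1 - β) = t ^ (-β) * t ^ (α - 1) := by
    rw [← Real.rpow_add ht0]
    ring_nf
  have hinv : t ^ β * t ^ (-β) = 1 := by rw [← Real.rpow_add ht0, add_neg_cancel, Real.rpow_zero]
  rw [abs_of_pos h1t, ← ENNReal.ofReal_mul hβ1, ← ENNReal.ofReal_mul hβ2,
    ← ENNReal.ofReal_add (by positivity) (by positivity), hγ]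
  congr 1
  linear_combination (-(t ^ (α - 1) * (1 - t) ^ (-1 - α))) * hinv

theorem lintegral_rpow_neg_sub_one_ne_top (hβ : 0 ≤ β) (hβα : β ≤ α - 1) (hl : l < 1) :
    ∫⁻ t in Ioo 0 l, ENNReal.ofReal (t ^ (-β) - 1) *
      ENNReal.ofReal (t ^ (α - 1) * |1 - t| ^ (-1 - α)) ≠ ∞ := by
  refine ne_top_of_le_ne_top (b := ENNReal.ofReal ((1 - l) ^ (-1 - α)) * volume (Ioo 0 l))
    (ENNReal.mul_ne_top ENNReal.ofReal_ne_top (by simp)) ?_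
  rw [← setLIntegral_const]
  refine setLIntegral_mono measurable_const fun t ⟨ht0, htl⟩ => ?_
  have h1t : 0 < 1 - t := by linarith
  rw [abs_of_pos h1t, ← ENNReal.ofReal_mul' (by positivity)]
  refine ENNReal.ofReal_le_ofReal ?_
  calc (t ^ (-β) - 1) * (t ^ (α - 1) * (1 - t) ^ (-1 - α))
      ≤ t ^ (-β) * (t ^ (α - 1) * (1 - t) ^ (-1 - α)) :=
        mul_le_mul_of_nonneg_right (sub_le_self _ zero_le_one) (by positivity)
    _ = t ^ (α - 1 - β) * (1 - t) ^ (-1 - α) := by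
        rw [← mul_assoc, ← Real.rpow_add ht0]
        ring_nf
    _ ≤ 1 * (1 - l) ^ (-1 - α) :=
        mul_le_mul (Real.rpow_le_one ht0.le (by linarith) (by linarith))
          (Real.rpow_le_rpow_of_nonpos (by linarith) (by linarith) (by linarith))
          (by positivity) zero_le_one
    _ = _ := one_mul _

end Truncated

theorem intervalIntegral_rpow_mul_one_sub_rpow {a b : ℝ} (ha : 0 < a) (hb : 0 < b) :
    ∫ t in (0 : ℝ)..1, t ^ (a - 1) * (1 - t) ^ (b - 1) = eulerBeta a b := by
  have h := ProbabilityTheory.beta_eq_betaIntegralReal a b ha hb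
  rw [ProbabilityTheory.beta, Complex.betaIntegral] at h
  have cpow_eq : ∀ t ∈ uIcc (0 : ℝ) 1, (t : ℂ) ^ ((a : ℂ) - 1) * (1 - (t : ℂ)) ^ ((b : ℂ) - 1) =
      ((t ^ (a - 1) * (1 - t) ^ (b - 1) : ℝ) : ℂ) := fun t ht => by
    rw [uIcc_of_le zero_le_one] at ht
    rw [Complex.ofReal_mul, Complex.ofReal_cpow ht.1, Complex.ofReal_cpow (by linarith [ht.2])]
    push_cast
    rfl
  rw [eulerBeta, h, intervalIntegral.integral_congr cpow_eq, intervalIntegral.integral_ofReal,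
    Complex.ofReal_re]

theorem intervalIntegrable_rpow_mul_one_sub_rpow {a b : ℝ} (ha : 0 < a) (hb : 0 < b) :
    IntervalIntegrable (fun t : ℝ => t ^ (a - 1) * (1 - t) ^ (b - 1)) volume 0 1 := by
  refine intervalIntegral.intervalIntegrable_of_integral_ne_zero ?_
  rw [intervalIntegral_rpow_mul_one_sub_rpow ha hb]
  exact (ProbabilityTheory.beta_pos ha hb).ne'

theorem mul_eulerBeta_one_sub_two_mul {β : ℝ} (hβ : 0 < β) (hβ2 : β < 1 / 2) :
    β * eulerBeta β (1 - 2 * β) = eulerBeta (β + 1) (1 / 2 - β) / 2 ^ (2 * β + 1) := by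
  have hdup := Real.Gamma_mul_Gamma_add_half (1 / 2 - β)
  rw [show 1 / 2 - β + 1 / 2 = β + (1 - 2 * β) by ring,
    show 2 * (1 / 2 - β) = 1 - 2 * β by ring, show 1 - (1 - 2 * β) = 2 * β + 1 - 1 by ring,
    Real.rpow_sub_one two_ne_zero] at hdup
  have hsum : Real.Gamma (β + 1 + (1 / 2 - β)) = √Real.pi / 2 := by
    rw [show β + 1 + (1 / 2 - β) = 1 / 2 + 1 by ring, Real.Gamma_add_one (by norm_num),
      Real.Gamma_one_half_eq]
    ring
  have hΓ : 0 < Real.Gamma (β + (1 - 2 * β)) := Real.Gamma_pos_of_pos (by linarith)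
  rw [eulerBeta, eulerBeta, hsum, Real.Gamma_add_one hβ.ne']
  generalize Real.Gamma (β + (1 - 2 * β)) = c at hΓ hdup ⊢
  generalize Real.Gamma (1 / 2 - β) = a at hdup ⊢
  generalize Real.Gamma (1 - 2 * β) = b at hdup ⊢
  field_simp at hdup ⊢
  linear_combination -hdup

/-- An explicit function whose derivative differs from the integrand of the sharp Hardy constant
by the integrand of a beta integral. -/
noncomputable def hardyPrimitive (β t : ℝ) : ℝ :=
  (1 - t ^ β) * (1 - t ^ (β + 1)) * (1 - t) ^ (-(2 * β + 1)) / (2 * β + 1)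

section HardyPrimitive

variable {β : ℝ}

theorem hasDerivAt_hardyPrimitive (hβ : 2 * β + 1 ≠ 0) {t : ℝ} (ht : t ∈ Ioo 0 1) :
    HasDerivAt (hardyPrimitive β)
      ((1 - t ^ β) ^ 2 * (1 - t) ^ (-(2 * β + 2)) -
        β / (2 * β + 1) * (t ^ (β - 1) * (1 - t) ^ (1 - 2 * β - 1))) t := by
  have ht0 : t ≠ 0 := ht.1.ne'
  have h1t : 1 - t ≠ 0 := (sub_pos.mpr ht.2).ne'
  have d1 : HasDerivAt (· ^ β) (β * t ^ (β - 1)) t := Real.hasDerivAt_rpow_const (.inl ht0)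
  have d2 : HasDerivAt (· ^ (β + 1)) ((β + 1) * t ^ (β + 1 - 1)) t :=
    Real.hasDerivAt_rpow_const (.inl ht0)
  have d3 := ((hasDerivAt_id' t).const_sub 1).rpow_const (p := -(2 * β + 1)) (.inl h1t)
  refine ((((d1.const_sub 1).mul (d2.const_sub 1)).mul d3).div_const (2 * β + 1)).congr_deriv ?_
  have e1 : (1 - t) ^ (-(2 * β + 1)) = (1 - t) ^ (-(2 * β + 2)) * (1 - t) := by
    rw [← Real.rpow_add_one h1t]
    ring_nf
  have e2 : (1 - t) ^ (1 - 2 * β - 1) = (1 - t) ^ (-(2 * β + 2)) * (1 - t) * (1 - t) := by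
    rw [← e1, ← Real.rpow_add_one h1t]
    ring_nf
  have e3 : t ^ β = t ^ (β - 1) * t := by rw [← Real.rpow_add_one ht0, sub_add_cancel]
  simp only [Pi.mul_apply]
  rw [show -(2 * β + 1) - 1 = -(2 * β + 2) by ring, add_sub_cancel_right,
    Real.rpow_add_one ht0, e1, e2, e3]
  generalize (1 - t) ^ (-(2 * β + 2)) = a
  generalize t ^ (β - 1) = b
  rw [mul_comm 2 β] at hβ ⊢
  field_simp
  ring

theorem tendsto_hardyPrimitive_zero (hβ : 0 < β) :
    Tendsto (hardyPrimitive β) (𝓝[>] 0) (𝓝 (1 / (2 * β + 1))) := by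
  have hc : ContinuousAt (hardyPrimitive β) 0 := by
    have h1 : ContinuousAt (fun t : ℝ => t ^ β) 0 := Real.continuousAt_rpow_const _ _ (.inr hβ.le)
    have h2 : ContinuousAt (fun t : ℝ => t ^ (β + 1)) 0 :=
      Real.continuousAt_rpow_const _ _ (.inr (by linarith))
    have h3 : ContinuousAt (fun t : ℝ => (1 - t) ^ (-(2 * β + 1))) 0 :=
      ContinuousAt.rpow_const (by fun_prop) (.inl (by norm_num))
    unfold hardyPrimitive
    fun_prop
  have h0 : hardyPrimitive β 0 = 1 / (2 * β + 1) := by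
    simp [hardyPrimitive, Real.zero_rpow hβ.ne', Real.zero_rpow (by linarith : β + 1 ≠ 0)]
  exact h0 ▸ hc.tendsto.mono_left nhdsWithin_le_nhds

theorem one_sub_rpow_le_one_sub {t : ℝ} (hβ : β ≤ 1) (ht : t ∈ Ioo 0 1) : 1 - t ^ β ≤ 1 - t :=
  sub_le_sub_left (Real.self_le_rpow_of_le_one ht.1.le ht.2.le hβ) 1

theorem one_sub_rpow_nonneg {t : ℝ} (hβ : 0 ≤ β) (ht : t ∈ Ioo 0 1) : 0 ≤ 1 - t ^ β :=
  sub_nonneg.mpr (Real.rpow_le_one ht.1.le ht.2.le hβ)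

theorem tendsto_hardyPrimitive_one (hβ : 0 ≤ β) (hβ2 : β < 1 / 2) :
    Tendsto (hardyPrimitive β) (𝓝[<] 1) (𝓝 0) := by
  have hlim : Tendsto (fun t : ℝ => 2 * (1 - t) ^ (1 - 2 * β) / (2 * β + 1)) (𝓝[<] 1) (𝓝 0) := by
    have hc : ContinuousAt (fun t : ℝ => (1 - t) ^ (1 - 2 * β)) 1 :=
      ContinuousAt.rpow_const (by fun_prop) (.inr (by linarith))
    have := ((hc.const_mul 2).div_const (2 * β + 1)).tendsto.mono_left
      (nhdsWithin_le_nhds (s := Iio 1))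
    simpa [Real.zero_rpow (by linarith : 1 - 2 * β ≠ 0)] using this
  refine tendsto_of_tendsto_of_tendsto_of_le_of_le' tendsto_const_nhds hlim ?_ ?_ <;>
    filter_upwards [Ioo_mem_nhdsLT zero_lt_one] with t ht
  all_goals
    have h1t : 0 < 1 - t := sub_pos.mpr ht.2
    have hβ1 := one_sub_rpow_nonneg hβ ht
    have hβ1' := one_sub_rpow_nonneg (by linarith : 0 ≤ β + 1) ht
    unfold hardyPrimitive
  · positivity
  · have hle : 1 - t ^ β ≤ 1 - t := one_sub_rpow_le_one_sub (by linarith) ht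
    have hle' : 1 - t ^ (β + 1) ≤ 2 * (1 - t) := by
      rw [Real.rpow_add_one ht.1.ne']
      nlinarith [ht.1]
    gcongr ?_ / _
    calc (1 - t ^ β) * (1 - t ^ (β + 1)) * (1 - t) ^ (-(2 * β + 1))
        ≤ (1 - t) * (2 * (1 - t)) * (1 - t) ^ (-(2 * β + 1)) := by gcongr
      _ = 2 * (1 - t) ^ (1 - 2 * β) := by
          rw [show 1 - 2 * β = -(2 * β + 1) + 1 + 1 by ring, Real.rpow_add_one h1t.ne',
            Real.rpow_add_one h1t.ne']
          ring

theorem intervalIntegrable_sq_one_sub_rpow_mul (hβ : 0 ≤ β) (hβ2 : β < 1 / 2) :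
    IntervalIntegrable (fun t : ℝ => (1 - t ^ β) ^ 2 * (1 - t) ^ (-(2 * β + 2))) volume 0 1 := by
  have hdom := intervalIntegrable_rpow_mul_one_sub_rpow one_pos (by linarith : 0 < 1 - 2 * β)
  rw [intervalIntegrable_iff_integrableOn_Ioo_of_le zero_le_one] at hdom ⊢
  refine Integrable.mono' hdom (by fun_prop) ?_
  filter_upwards [ae_restrict_mem measurableSet_Ioo] with t ht
  have h1t : 0 < 1 - t := sub_pos.mpr ht.2
  rw [Real.norm_of_nonneg (by positivity)]
  calc (1 - t ^ β) ^ 2 * (1 - t) ^ (-(2 * β + 2))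
      ≤ (1 - t) ^ 2 * (1 - t) ^ (-(2 * β + 2)) :=
        mul_le_mul_of_nonneg_right (pow_le_pow_left₀ (one_sub_rpow_nonneg hβ ht)
          (one_sub_rpow_le_one_sub (by linarith) ht) 2) (by positivity)
    _ = t ^ ((1 : ℝ) - 1) * (1 - t) ^ (1 - 2 * β - 1) := by
        rw [sub_self, Real.rpow_zero, one_mul, ← Real.rpow_natCast, ← Real.rpow_add h1t]
        push_cast
        ring_nf

theorem intervalIntegral_sq_one_sub_rpow_mul (hβ : 0 < β) (hβ2 : β < 1 / 2) :
    ∫ t in (0 : ℝ)..1, (1 - t ^ β) ^ 2 * (1 - t) ^ (-(2 * β + 2)) =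
      (β * eulerBeta β (1 - 2 * β) - 1) / (2 * β + 1) := by
  have hf := intervalIntegrable_sq_one_sub_rpow_mul hβ.le hβ2
  have hβ2' : 0 < 1 - 2 * β := by linarith
  have hbeta :=
    (intervalIntegrable_rpow_mul_one_sub_rpow hβ hβ2').const_mul (β / (2 * β + 1))
  have hFTC := intervalIntegral.integral_eq_sub_of_hasDerivAt_of_tendsto zero_lt_one
    (fun t ht => hasDerivAt_hardyPrimitive (by linarith) ht) (hf.sub hbeta)
    (tendsto_hardyPrimitive_zero hβ) (tendsto_hardyPrimitive_one hβ.le hβ2)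
  rw [intervalIntegral.integral_sub hf hbeta, intervalIntegral.integral_const_mul,
    intervalIntegral_rpow_mul_one_sub_rpow hβ hβ2'] at hFTC
  linear_combination hFTC

end HardyPrimitive

theorem truncatedHardyConst_one {α : ℝ} (hα1 : 1 < α) (hα2 : α < 2) :
    truncatedHardyConst α ((α - 1) / 2) 1 = ENNReal.ofReal
      ((eulerBeta ((1 + α) / 2) ((2 - α) / 2) - 2 ^ α) / (α * 2 ^ α)) := by
  obtain ⟨β, rfl⟩ : ∃ β, α = 2 * β + 1 := ⟨(α - 1) / 2, by ring⟩
  have hβ : 0 < β := by linarith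
  have hβ2 : β < 1 / 2 := by linarith
  have hint := intervalIntegral_sq_one_sub_rpow_mul hβ hβ2
  have hinteg := intervalIntegrable_sq_one_sub_rpow_mul hβ.le hβ2
  rw [intervalIntegrable_iff_integrableOn_Ioo_of_le zero_le_one] at hinteg
  rw [intervalIntegral.integral_of_le zero_le_one, integral_Ioc_eq_integral_Ioo,
    mul_eulerBeta_one_sub_two_mul hβ hβ2] at hint
  have integrand_eq (t : ℝ) : (1 - t ^ ((2 * β + 1 - 1) / 2)) *
      (1 - t ^ (2 * β + 1 - 1 - (2 * β + 1 - 1) / 2)) * (1 - t) ^ (-1 - (2 * β + 1)) =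
      (1 - t ^ β) ^ 2 * (1 - t) ^ (-(2 * β + 2)) := by
    ring_nf
  have nonneg : 0 ≤ᵐ[volume.restrict (Ioo 0 1)]
      fun t : ℝ => (1 - t ^ β) ^ 2 * (1 - t) ^ (-(2 * β + 2)) := by
    filter_upwards [ae_restrict_mem measurableSet_Ioo] with t ht
    exact mul_nonneg (sq_nonneg _) (Real.rpow_nonneg (sub_nonneg.mpr ht.2.le) _)
  simp only [truncatedHardyConst, integrand_eq]
  rw [← ofReal_integral_eq_lintegral_ofReal hinteg nonneg, hint,
    show (1 + (2 * β + 1)) / 2 = β + 1 by ring, show (2 - (2 * β + 1)) / 2 = 1 / 2 - β by ring]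
  congr 1
  field_simp

/-! ### Ground state representation -/

/-- The density, on pairs of points, of the form in `v` that the substitution `u = h * v`
produces from the fractional form of `u`. -/
noncomputable def groundStateDensity {n : ℕ} (α : ℝ) (h u : EuclideanSpace ℝ (Fin n) → ℝ)
    (p : EuclideanSpace ℝ (Fin n) × EuclideanSpace ℝ (Fin n)) : ℝ≥0∞ :=
  ENNReal.ofReal (h p.1 * h p.2 * (u p.1 / h p.1 - u p.2 / h p.2) ^ 2) * jumpKernel α p.1 p.2

theorem two_mul_setLIntegral_le_of_disjoint_preimage_swap {X : Type*} [MeasurableSpace X]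
    {μ : Measure X} [SFinite μ] {f : X × X → ℝ≥0∞} (hf : ∀ p, f p.swap = f p)
    {s t : Set (X × X)} (hs : MeasurableSet s) (hdisj : Disjoint s (Prod.swap ⁻¹' s))
    (hst : s ∪ Prod.swap ⁻¹' s ⊆ t) :
    2 * ∫⁻ p in s, f p ∂μ.prod μ ≤ ∫⁻ p in t, f p ∂μ.prod μ := by
  have hswap : ∫⁻ p in Prod.swap ⁻¹' s, f p ∂μ.prod μ = ∫⁻ p in s, f p ∂μ.prod μ := by
    have h := (Measure.measurePreserving_swap (μ := μ) (ν := μ)).setLIntegral_comp_preimage_emb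
      MeasurableEquiv.prodComm.measurableEmbedding f s
    simpa only [hf] using h
  calc 2 * ∫⁻ p in s, f p ∂μ.prod μ
      = ∫⁻ p in s ∪ Prod.swap ⁻¹' s, f p ∂μ.prod μ := by
        rw [lintegral_union (measurable_swap hs) hdisj, hswap, two_mul]
    _ ≤ _ := lintegral_mono_set hst

theorem tendsto_setLIntegral_iUnion {X : Type*} [MeasurableSpace X] {μ : Measure X}
    {s : ℕ → Set X} (hs : Monotone s) (f : X → ℝ≥0∞) :
    Tendsto (fun k => ∫⁻ x in s k, f x ∂μ) atTop (𝓝 (∫⁻ x in ⋃ k, s k, f x ∂μ)) := by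
  rw [setLIntegral_iUnion_of_directed _ hs.directed_le]
  exact tendsto_atTop_iSup fun _ _ hjk => lintegral_mono_set (hs hjk)

section GroundState

variable {n : ℕ} {i : Fin n} {α β l : ℝ} {u : EuclideanSpace ℝ (Fin n) → ℝ}

theorem energy_eq_setLIntegral_prod (hu : Measurable u) (D : Set (EuclideanSpace ℝ (Fin n))) :
    energy n α D u = 1 / 2 * ∫⁻ p in D ×ˢ D,
      ENNReal.ofReal ((u p.1 - u p.2) ^ 2) * jumpKernel α p.1 p.2 := by
  rw [Measure.volume_eq_prod, setLIntegral_prod _ (by fun_prop), energy]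
  simp only [jumpKernel, ← ENNReal.ofReal_mul (sq_nonneg _), Real.rpow_neg (norm_nonneg _),
    div_eq_mul_inv]

theorem setLIntegral_ratioPairs_le_energy (hu : Measurable u) (hl : l ≤ 1) :
    ∫⁻ p in ratioPairs i l, ENNReal.ofReal ((u p.1 - u p.2) ^ 2) * jumpKernel α p.1 p.2 ≤
      energy n α (halfSpace i) u := by
  have hdisj : Disjoint (ratioPairs i 1) (Prod.swap ⁻¹' ratioPairs i 1) := by
    refine Set.disjoint_left.mpr fun p ⟨hp, hlt⟩ ⟨_, (hgt : p.2 i / p.1 i < 1)⟩ => ?_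
    exact lt_asymm ((div_lt_one hp.2).mp hlt) ((div_lt_one hp.1).mp hgt)
  have hunion : ratioPairs i 1 ∪ Prod.swap ⁻¹' ratioPairs i 1 ⊆ halfSpace i ×ˢ halfSpace i :=
    union_subset inter_subset_left fun _ hp => ⟨hp.1.2, hp.1.1⟩
  refine (lintegral_mono_set (monotone_ratioPairs i hl)).trans ?_
  rw [energy_eq_setLIntegral_prod hu, one_div, mul_comm, ← div_eq_mul_inv,
    ENNReal.le_div_iff_mul_le (.inl two_ne_zero) (.inl ENNReal.ofNat_ne_top), mul_comm]
  refine two_mul_setLIntegral_le_of_disjoint_preimage_swap (fun p => ?_)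
    (measurableSet_ratioPairs i 1) hdisj hunion
  rw [Prod.fst_swap, Prod.snd_swap, ← neg_sub, neg_sq, jumpKernel_comm]

theorem sq_sub_add_mul_sq_eq {a b : ℝ} (ha : a ≠ 0) (hb : b ≠ 0) (s t : ℝ) :
    (s - t) ^ 2 + (b / a - 1) * s ^ 2 =
      a * b * (s / a - t / b) ^ 2 + (1 - a / b) * t ^ 2 := by
  field_simp
  ring

theorem ofReal_sq_sub_mul_jumpKernel_add (hβ : 0 ≤ β)
    {p : EuclideanSpace ℝ (Fin n) × EuclideanSpace ℝ (Fin n)} (hp : p ∈ ratioPairs i 1) :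
    ENNReal.ofReal ((u p.1 - u p.2) ^ 2) * jumpKernel α p.1 p.2 +
        ENNReal.ofReal ((p.1 i / p.2 i) ^ (-β) - 1) *
          (ENNReal.ofReal (u p.1 ^ 2) * jumpKernel α p.1 p.2) =
      groundStateDensity α (fun x => x i ^ β) u p +
        ENNReal.ofReal (1 - (p.1 i / p.2 i) ^ β) *
          (ENNReal.ofReal (u p.2 ^ 2) * jumpKernel α p.1 p.2) := by
  obtain ⟨⟨hx, hy⟩, hlt⟩ := hp
  have hρ : 0 < p.1 i / p.2 i := div_pos hx hy
  have h1 : 0 ≤ (p.1 i / p.2 i) ^ (-β) - 1 :=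
    sub_nonneg.mpr (Real.one_le_rpow_of_pos_of_le_one_of_nonpos hρ hlt.le (by linarith))
  have h2 : 0 ≤ 1 - (p.1 i / p.2 i) ^ β := one_sub_rpow_nonneg hβ ⟨hρ, hlt⟩
  have ha : 0 < p.1 i ^ β := Real.rpow_pos_of_pos hx β
  have hb : 0 < p.2 i ^ β := Real.rpow_pos_of_pos hy β
  rw [groundStateDensity, ← mul_assoc, ← mul_assoc, ← add_mul, ← add_mul,
    ← ENNReal.ofReal_mul h1, ← ENNReal.ofReal_mul h2, ← ENNReal.ofReal_add (by positivity)
    (by positivity), ← ENNReal.ofReal_add (by positivity) (by positivity), Real.rpow_neg hρ.le,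
    Real.div_rpow hx.le hy.le, inv_div, sq_sub_add_mul_sq_eq ha.ne' hb.ne']

theorem measurable_groundStateDensity {h : EuclideanSpace ℝ (Fin n) → ℝ} (hh : Measurable h)
    (hu : Measurable u) : Measurable (groundStateDensity α h u) := by
  unfold groundStateDensity
  fun_prop

theorem setLIntegral_groundStateDensity_add_le_energy_of_lt_one (hβ : 0 ≤ β) (hβα : β ≤ α - 1)
    (hl : l < 1) (hu : Measurable u) (hfin : hardyIntegral i α u ≠ ∞) :
    (∫⁻ p in ratioPairs i l, groundStateDensity α (fun x => x i ^ β) u p) +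
        hardyIntegral i α u *
          (ENNReal.ofReal (transversalConst n α) * truncatedHardyConst α β l) ≤
      energy n α (halfSpace i) u := by
  have hα : 0 < α := by linarith
  have cancel_ne_top := ENNReal.mul_ne_top hfin (ENNReal.mul_ne_top
    (ENNReal.ofReal_ne_top (r := transversalConst n α))
    (lintegral_rpow_neg_sub_one_ne_top hβ hβα hl))
  have h := setLIntegral_congr_fun (μ := volume) (measurableSet_ratioPairs i l) fun p hp =>
    ofReal_sq_sub_mul_jumpKernel_add (α := α) (u := u) hβ (monotone_ratioPairs i hl.le hp)
  rw [lintegral_add_left (by fun_prop),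
    lintegral_add_left (measurable_groundStateDensity (by fun_prop) hu),
    setLIntegral_ratioPairs_fst (g := fun t => ENNReal.ofReal (t ^ (-β) - 1)) hα hu (by fun_prop),
    setLIntegral_ratioPairs_snd (g := fun t => ENNReal.ofReal (1 - t ^ β)) hα hu (by fun_prop),
    lintegral_one_sub_rpow_eq_add_truncatedHardyConst hβ hβα hl.le, mul_add, mul_add,
    add_left_comm, add_comm, ENNReal.add_right_inj cancel_ne_top] at h
  exact h.ge.trans (setLIntegral_ratioPairs_le_energy hu hl.le)

theorem setLIntegral_groundStateDensity_add_le_energy (hβ : 0 ≤ β) (hβα : β ≤ α - 1)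
    (hu : Measurable u) (hfin : hardyIntegral i α u ≠ ∞) :
    (∫⁻ p in ratioPairs i 1, groundStateDensity α (fun x => x i ^ β) u p) +
        hardyIntegral i α u *
          (ENNReal.ofReal (transversalConst n α) * truncatedHardyConst α β 1) ≤
      energy n α (halfSpace i) u := by
  obtain ⟨l, hl_mono, hl, hl_tendsto⟩ := exists_seq_strictMono_tendsto (1 : ℝ)
  have exists_lt {r : ℝ} : (∃ k, r < l k) ↔ r < 1 :=
    ⟨fun ⟨k, hk⟩ => hk.trans (hl k), fun hr => (hl_tendsto.eventually (lt_mem_nhds hr)).exists⟩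
  have iUnion_ratioPairs : ⋃ k, ratioPairs i (l k) = ratioPairs i 1 := by
    ext p
    simp only [ratioPairs, mem_iUnion, mem_inter_iff, mem_ofPred_eq, exists_and_left, exists_lt]
  have iUnion_Ioo : ⋃ k, Ioo 0 (l k) = Ioo 0 1 := by
    ext t
    simp only [mem_iUnion, mem_Ioo, exists_and_left, exists_lt]
  have tendsto_density := tendsto_setLIntegral_iUnion (μ := volume)
    ((monotone_ratioPairs i).comp hl_mono.monotone) (groundStateDensity α (fun x => x i ^ β) u)
  have tendsto_const : Tendsto (fun k => truncatedHardyConst α β (l k)) atTop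
      (𝓝 (truncatedHardyConst α β 1)) := by
    unfold truncatedHardyConst
    rw [← iUnion_Ioo]
    exact tendsto_setLIntegral_iUnion
      (fun _ _ hjk => Ioo_subset_Ioo_right (hl_mono.monotone hjk)) _
  simp only [Function.comp_apply, iUnion_ratioPairs] at tendsto_density
  refine le_of_tendsto' (tendsto_density.add (ENNReal.Tendsto.const_mul (ENNReal.Tendsto.const_mul
    tendsto_const (.inr ENNReal.ofReal_ne_top)) (.inr hfin))) fun k => ?_
  exact setLIntegral_groundStateDensity_add_le_energy_of_lt_one hβ hβα (hl k) hu hfin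

end GroundState

/-! ### A weighted Sobolev inequality -/

/-- The critical Sobolev exponent `2^*`. -/
noncomputable abbrev sobolevExponent (n : ℕ) (α : ℝ) : ℝ := (2 * n) / ((n : ℝ) - α)

/-- The constant produced by the proof of the weighted Sobolev inequality; it is not optimal. -/
noncomputable def sobolevConst (n : ℕ) (α : ℝ) : ℝ :=
  2 ^ (-((n : ℝ) + α)) / 8 * volume.real (ball (0 : EuclideanSpace ℝ (Fin n)) 1) *
    (2 ^ (sobolevExponent n α + 1) /
      volume.real (ball (0 : EuclideanSpace ℝ (Fin n)) 1)) ^ (-(α / n))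

theorem sq_div_four_le_mul_sq_sub {a b s t : ℝ} (ha : 0 < a) (hab : a ≤ b) (hst : |t| ≤ |s| / 2) :
    s ^ 2 / 4 ≤ a * b * (s / a - t / b) ^ 2 := by
  have hb : 0 < b := ha.trans_le hab
  have hdiff : |s| * b / 2 ≤ |s * b - t * a| := by
    have htri := abs_sub_abs_le_abs_sub (s * b) (t * a)
    rw [abs_mul, abs_mul, abs_of_pos ha, abs_of_pos hb] at htri
    linarith [mul_le_mul hst hab ha.le (by positivity)]
  calc s ^ 2 / 4 = (|s| * b / 2) ^ 2 / (b * b) := by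
        rw [div_pow, mul_pow, sq_abs]
        field_simp
        norm_num
    _ ≤ |s * b - t * a| ^ 2 / (a * b) := by gcongr
    _ = a * b * (s / a - t / b) ^ 2 := by
        rw [sq_abs]
        field_simp

theorem measure_div_two_le_measure_inter_lt {X : Type*} [MeasurableSpace X] {μ : Measure X}
    {s : Set X} (hμs : μ s ≠ ∞) {f : X → ℝ≥0∞} (hf : Measurable f)
    {a : ℝ≥0∞} (ha0 : a ≠ 0) (ha : a ≠ ∞) (h : 2 * ∫⁻ x in s, f x ∂μ ≤ a * μ s) :
    μ s / 2 ≤ μ (s ∩ {x | f x < a}) := by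
  have chebyshev : 2 * (a * μ (s ∩ {x | a ≤ f x})) ≤ a * μ s := by
    rw [inter_comm, ← Measure.restrict_apply (measurableSet_le measurable_const hf)]
    exact le_trans (by gcongr; exact mul_meas_ge_le_lintegral hf a) h
  rw [mul_left_comm, ENNReal.mul_le_mul_iff_right ha0 ha] at chebyshev
  have large_le : μ (s ∩ {x | a ≤ f x}) ≤ μ s / 2 := by
    rwa [ENNReal.le_div_iff_mul_le (.inl two_ne_zero) (.inl ENNReal.ofNat_ne_top), mul_comm]
  have hsplit : μ s / 2 + μ s / 2 ≤ μ s / 2 + μ (s ∩ {x | f x < a}) := calc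
    μ s / 2 + μ s / 2 = μ s := ENNReal.add_halves _
    _ ≤ μ (s ∩ {x | a ≤ f x}) + μ (s ∩ {x | f x < a}) := by
      refine (measure_mono fun x hx => ?_).trans (measure_union_le _ _)
      exact (le_or_gt a (f x)).imp (⟨hx, ·⟩) (⟨hx, ·⟩)
    _ ≤ _ := by gcongr
  exact (ENNReal.add_le_add_iff_left (ENNReal.div_ne_top hμs two_ne_zero)).mp hsplit

section Sobolev

variable {n : ℕ} {i : Fin n} {α : ℝ} {u h : EuclideanSpace ℝ (Fin n) → ℝ}
  {x y : EuclideanSpace ℝ (Fin n)}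

theorem lt_and_norm_sub_le_of_mem_ball_add_single {r : ℝ}
    (hy : y ∈ ball (x + EuclideanSpace.single i r) r) : x i < y i ∧ ‖x - y‖ ≤ 2 * r := by
  have hr : 0 < r := pos_of_mem_ball hy
  rw [mem_ball, dist_eq_norm] at hy
  constructor
  · have hcoord := (PiLp.norm_apply_le (y - (x + EuclideanSpace.single i r)) i).trans_lt hy
    simp only [PiLp.sub_apply, PiLp.add_apply, PiLp.single_apply, if_true,
      Real.norm_eq_abs] at hcoord
    linarith [(abs_lt.mp hcoord).1]
  · calc ‖x - y‖ = ‖(y - (x + EuclideanSpace.single i r)) + EuclideanSpace.single i r‖ := by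
          rw [norm_sub_rev]
          congr 1
          abel
      _ ≤ ‖y - (x + EuclideanSpace.single i r)‖ + ‖EuclideanSpace.single i r‖ := norm_add_le _ _
      _ ≤ 2 * r := by
          rw [PiLp.norm_single, Real.norm_of_nonneg hr.le]
          linarith

theorem ofReal_le_groundStateDensity (hα : -(n : ℝ) ≤ α) (hx : 0 < h x) (hxy : h x ≤ h y)
    (hne : x ≠ y) {R : ℝ} (hR : ‖x - y‖ ≤ R) (hu : |u y| ≤ |u x| / 2) :
    ENNReal.ofReal (u x ^ 2 / 4 * R ^ (-((n : ℝ) + α))) ≤ groundStateDensity α h u (x, y) := by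
  rw [groundStateDensity, jumpKernel, ENNReal.ofReal_mul (by positivity)]
  gcongr ?_ * ENNReal.ofReal ?_
  · exact ENNReal.ofReal_le_ofReal (sq_div_four_le_mul_sq_sub hx hxy hu)
  · exact Real.rpow_le_rpow_of_nonpos (norm_pos_iff.mpr (sub_ne_zero.mpr hne)) hR (by linarith)

theorem le_setLIntegral_groundStateDensity (hα : -(n : ℝ) ≤ α) (hpos : 0 < h x)
    (hmono : ∀ y, x i < y i → h x ≤ h y) (hu : Measurable u) {q : ℝ} (hq : 0 ≤ q)
    (hx : 0 < x i) (hux : u x ≠ 0) {r : ℝ}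
    (hr : 2 * ∫⁻ y in halfSpace i, ENNReal.ofReal (|u y| ^ q) ≤
      ENNReal.ofReal ((|u x| / 2) ^ q) * volume (ball (0 : EuclideanSpace ℝ (Fin n)) r)) :
    ENNReal.ofReal (u x ^ 2 / 4 * (2 * r) ^ (-((n : ℝ) + α))) *
        (volume (ball (0 : EuclideanSpace ℝ (Fin n)) r) / 2) ≤
      ∫⁻ y in {y | x i < y i}, groundStateDensity α h u (x, y) := by
  set B := ball (x + EuclideanSpace.single i r) r
  set S := {y | ENNReal.ofReal (|u y| ^ q) < ENNReal.ofReal ((|u x| / 2) ^ q)}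
  have hB {y} (hy : y ∈ B) := lt_and_norm_sub_le_of_mem_ball_add_single hy
  have hBS : volume B / 2 ≤ volume (B ∩ S) := by
    refine measure_div_two_le_measure_inter_lt measure_ball_lt_top.ne
      (by fun_prop) (by simpa using by positivity) ENNReal.ofReal_ne_top ?_
    rw [Measure.addHaar_ball_center]
    refine le_trans ?_ hr
    gcongr
    exact fun y hy => hx.trans (hB hy).1
  rw [← Measure.addHaar_ball_center volume (x + EuclideanSpace.single i r)]
  have hS : MeasurableSet S := measurableSet_lt (by fun_prop) measurable_const
  calc ENNReal.ofReal (u x ^ 2 / 4 * (2 * r) ^ (-((n : ℝ) + α))) * (volume B / 2)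
      ≤ ∫⁻ _ in B ∩ S, ENNReal.ofReal (u x ^ 2 / 4 * (2 * r) ^ (-((n : ℝ) + α))) := by
        rw [setLIntegral_const]
        gcongr
    _ ≤ ∫⁻ y in B ∩ S, groundStateDensity α h u (x, y) := by
        refine setLIntegral_mono' (measurableSet_ball.inter hS) fun y ⟨hyB, hyS⟩ => ?_
        refine ofReal_le_groundStateDensity hα hpos (hmono y (hB hyB).1) ?_ (hB hyB).2 ?_
        · rintro rfl
          exact lt_irrefl _ (hB hyB).1
        · have hlt := (ENNReal.ofReal_lt_ofReal_iff_of_nonneg (by positivity)).mp hyS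
          exact le_of_not_gt fun hgt => hlt.not_ge (Real.rpow_le_rpow (by positivity) hgt.le hq)
    _ ≤ _ := lintegral_mono_set fun y hy => (hB hy.1).1

theorem setLIntegral_ratioPairs_one
    {f : EuclideanSpace ℝ (Fin n) × EuclideanSpace ℝ (Fin n) → ℝ≥0∞} (hf : Measurable f) :
    ∫⁻ p in ratioPairs i 1, f p = ∫⁻ x in halfSpace i, ∫⁻ y in {y | x i < y i}, f (x, y) := by
  have hlt : MeasurableSet {p : EuclideanSpace ℝ (Fin n) × EuclideanSpace ℝ (Fin n) |
    p.1 i < p.2 i} := measurableSet_lt (by fun_prop) (by fun_prop)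
  have ratioPairs_one_eq : ratioPairs i 1 =
      {p : EuclideanSpace ℝ (Fin n) × EuclideanSpace ℝ (Fin n) | p.1 i < p.2 i} ∩
        halfSpace i ×ˢ univ :=
    Set.ext fun p =>
      ⟨fun ⟨⟨hx, hy⟩, (hp : p.1 i / p.2 i < 1)⟩ =>
          ⟨show p.1 i < p.2 i from (div_lt_one hy).mp hp, hx, trivial⟩,
        fun ⟨(hp : p.1 i < p.2 i), (hx : 0 < p.1 i), _⟩ =>
          ⟨⟨hx, hx.trans hp⟩, show p.1 i / p.2 i < 1 from (div_lt_one (hx.trans hp)).mpr hp⟩⟩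
  rw [ratioPairs_one_eq, ← setLIntegral_indicator hlt, Measure.volume_eq_prod,
    setLIntegral_prod _ (hf.indicator hlt).aemeasurable]
  refine setLIntegral_congr_fun (measurableSet_halfSpace i) fun x _ => ?_
  rw [Measure.restrict_univ, ← lintegral_indicator (measurableSet_lt (by fun_prop) (by fun_prop))]
  rfl

theorem volume_ball_eq_ofReal {r : ℝ} (hr : 0 < r) :
    volume (ball (0 : EuclideanSpace ℝ (Fin n)) r) =
      ENNReal.ofReal (r ^ n * volume.real (ball (0 : EuclideanSpace ℝ (Fin n)) 1)) := by
  rw [Measure.addHaar_ball_of_pos _ _ hr, finrank_euclideanSpace_fin,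
    ENNReal.ofReal_mul (by positivity), ofReal_measureReal measure_ball_lt_top.ne]

theorem sobolevExponent_pos (hn : n ≠ 0) (hαn : α < n) : 0 < sobolevExponent n α :=
  div_pos (by positivity) (sub_pos.mpr hαn)

theorem volume_real_ball_pos : 0 < volume.real (ball (0 : EuclideanSpace ℝ (Fin n)) 1) :=
  ENNReal.toReal_pos (measure_ball_pos _ _ one_pos).ne' measure_ball_lt_top.ne

theorem sobolevConst_pos : 0 < sobolevConst n α := by
  have hω := volume_real_ball_pos (n := n)
  unfold sobolevConst
  positivity

theorem sq_mul_two_mul_rpow_mul_pow {r : ℝ} (hr : 0 < r) (s ω : ℝ) :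
    s ^ 2 / 4 * (2 * r) ^ (-((n : ℝ) + α)) * (r ^ n * ω / 2) =
      2 ^ (-((n : ℝ) + α)) / 8 * ω * (s ^ 2 * r ^ (-α)) := by
  rw [Real.mul_rpow zero_le_two hr.le, show -α = -((n : ℝ) + α) + n by ring, Real.rpow_add hr,
    Real.rpow_natCast]
  ring

theorem sq_mul_rpow_eq_rpow_sobolevExponent (hn : n ≠ 0) (hαn : α < n) {b t : ℝ} (hb : 0 ≤ b)
    (ht : 0 < t) :
    t ^ 2 * (b ^ (1 / (n : ℝ)) * t ^ (-(sobolevExponent n α / n))) ^ (-α) =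
      b ^ (-(α / n)) * t ^ sobolevExponent n α := by
  have hαn' : (n : ℝ) - α ≠ 0 := (sub_pos.mpr hαn).ne'
  have hexp : 2 + sobolevExponent n α * α / n = sobolevExponent n α := by
    rw [sobolevExponent]
    field_simp
    ring
  rw [Real.mul_rpow (by positivity) (by positivity), ← Real.rpow_mul hb, ← Real.rpow_mul ht.le,
    mul_left_comm, ← Real.rpow_natCast t 2, ← Real.rpow_add ht]
  congr 2
  · ring
  · rw [neg_mul_neg, div_mul_eq_mul_div]
    exact_mod_cast hexp

theorem exists_radius_volume_eq_and_rpow_eq (hn : n ≠ 0) (hαn : α < n) {ω A t : ℝ} (hω : 0 < ω)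
    (hA : 0 < A) (ht : 0 < t) :
    ∃ r, 0 < r ∧ (t / 2) ^ sobolevExponent n α * (r ^ n * ω) = 2 * A ∧
      t ^ 2 * r ^ (-α) = (2 ^ (sobolevExponent n α + 1) / ω * A) ^ (-(α / n)) *
        t ^ sobolevExponent n α := by
  set q := sobolevExponent n α
  refine ⟨(2 ^ (q + 1) / ω * A) ^ (1 / (n : ℝ)) * t ^ (-(q / n)), by positivity, ?_,
    sq_mul_rpow_eq_rpow_sobolevExponent hn hαn (by positivity) ht⟩
  rw [mul_pow, ← Real.rpow_mul_natCast (by positivity), ← Real.rpow_mul_natCast ht.le,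
    one_div_mul_cancel (by positivity), Real.rpow_one, neg_mul, div_mul_cancel₀ _ (by positivity),
    Real.div_rpow ht.le zero_le_two, Real.rpow_neg ht.le, Real.rpow_add_one two_ne_zero]
  field_simp

theorem sobolevConst_mul_le_setLIntegral_groundStateDensity (hα : -(n : ℝ) ≤ α) (hαn : α < n)
    (hpos : 0 < h x) (hmono : ∀ y, x i < y i → h x ≤ h y) (hu : Measurable u) (hx : 0 < x i)
    {A : ℝ} (hA : 0 < A)
    (hint : ∫⁻ y in halfSpace i, ENNReal.ofReal (|u y| ^ sobolevExponent n α) =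
      ENNReal.ofReal A) :
    ENNReal.ofReal (sobolevConst n α * A ^ (-(α / n)) * |u x| ^ sobolevExponent n α) ≤
      ∫⁻ y in {y | x i < y i}, groundStateDensity α h u (x, y) := by
  have hn : n ≠ 0 := i.pos.ne'
  have hq := sobolevExponent_pos hn hαn
  by_cases hux : u x = 0
  · simp [hux, Real.zero_rpow hq.ne']
  have hω := volume_real_ball_pos (n := n)
  -- The ball has twice the volume that Chebyshev's inequality allows for `{|u| ≥ |u x| / 2}`.
  obtain ⟨r, hr, volume_eq, rpow_eq⟩ :=
    exists_radius_volume_eq_and_rpow_eq hn hαn hω hA (abs_pos.mpr hux)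
  have half_volume : volume (ball (0 : EuclideanSpace ℝ (Fin n)) r) / 2 =
      ENNReal.ofReal (r ^ n * volume.real (ball (0 : EuclideanSpace ℝ (Fin n)) 1) / 2) := by
    rw [volume_ball_eq_ofReal hr, ENNReal.ofReal_div_of_pos two_pos, ENNReal.ofReal_ofNat]
  refine le_trans (le_of_eq ?_)
    (le_setLIntegral_groundStateDensity hα hpos hmono hu hq.le hx hux (r := r) ?_)
  · rw [half_volume, ← ENNReal.ofReal_mul (by positivity), sq_mul_two_mul_rpow_mul_pow hr,
      ← sq_abs (u x), rpow_eq, Real.mul_rpow (by positivity) hA.le, sobolevConst]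
    simp only [mul_assoc]
  · rw [hint, volume_ball_eq_ofReal hr, ← ENNReal.ofReal_mul (by positivity), volume_eq,
      ENNReal.ofReal_mul zero_le_two, ENNReal.ofReal_ofNat]

theorem sobolevConst_mul_le_setLIntegral_ratioPairs (hα : -(n : ℝ) ≤ α) (hαn : α < n)
    (hh : Measurable h) (hpos : ∀ x, 0 < x i → 0 < h x)
    (hmono : ∀ x y, 0 < x i → x i < y i → h x ≤ h y) (hu : Measurable u)
    (hint : IntegrableOn (fun x => |u x| ^ sobolevExponent n α) (halfSpace i)) :
    ENNReal.ofReal (sobolevConst n α *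
        (∫ x in halfSpace i, |u x| ^ sobolevExponent n α) ^ (2 / sobolevExponent n α)) ≤
      ∫⁻ p in ratioPairs i 1, groundStateDensity α h u p := by
  have hn : n ≠ 0 := i.pos.ne'
  have hlint := (ofReal_integral_eq_lintegral_ofReal hint (ae_of_all _ fun x => by positivity)).symm
  have hA : 0 ≤ ∫ x in halfSpace i, |u x| ^ sobolevExponent n α :=
    integral_nonneg fun x => by positivity
  have two_div_exponent : 2 / sobolevExponent n α = -(α / n) + 1 := by
    have := (sub_pos.mpr hαn).ne'
    rw [sobolevExponent]
    field_simp
    ring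
  generalize ∫ x in halfSpace i, |u x| ^ sobolevExponent n α = A at hlint hA ⊢
  obtain rfl | hA := hA.eq_or_lt
  · simp [Real.zero_rpow (div_pos two_pos (sobolevExponent_pos hn hαn)).ne']
  have hc := sobolevConst_pos (n := n) (α := α)
  calc ENNReal.ofReal (sobolevConst n α * A ^ (2 / sobolevExponent n α))
      = ∫⁻ x in halfSpace i, ENNReal.ofReal
          (sobolevConst n α * A ^ (-(α / n)) * |u x| ^ sobolevExponent n α) := by
        simp only [ENNReal.ofReal_mul (by positivity : 0 ≤ sobolevConst n α * A ^ (-(α / n)))]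
        rw [lintegral_const_mul' _ _ ENNReal.ofReal_ne_top, hlint,
          ← ENNReal.ofReal_mul (by positivity), two_div_exponent, Real.rpow_add_one hA.ne',
          mul_assoc]
    _ ≤ ∫⁻ x in halfSpace i, ∫⁻ y in {y | x i < y i}, groundStateDensity α h u (x, y) :=
        setLIntegral_mono' (measurableSet_halfSpace i) fun x hx =>
          sobolevConst_mul_le_setLIntegral_groundStateDensity hα hαn (hpos x hx)
            (fun y => hmono x y hx) hu hx hA hlint
    _ = _ := (setLIntegral_ratioPairs_one (measurable_groundStateDensity hh hu)).symm

end Sobolev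

/-! ### The Hardy–Sobolev–Maz'ya inequality -/

section HalfSpace

variable {n : ℕ} {i : Fin n} {α : ℝ} {u : EuclideanSpace ℝ (Fin n) → ℝ}

theorem hardyIntegral_eq_ofReal_integral
    (hint : IntegrableOn (fun x => u x ^ 2 * x i ^ (-α)) (halfSpace i)) :
    hardyIntegral i α u = ENNReal.ofReal (∫ x in halfSpace i, u x ^ 2 * x i ^ (-α)) := by
  rw [ofReal_integral_eq_lintegral_ofReal hint ((ae_restrict_iff' (measurableSet_halfSpace i)).mpr
    (ae_of_all _ fun x hx => mul_nonneg (sq_nonneg _) (Real.rpow_nonneg (le_of_lt hx) _)))]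
  simp only [hardyIntegral, ENNReal.ofReal_mul (sq_nonneg _)]

theorem integrableOn_halfSpace_sq_mul_rpow (hu : Continuous u) (hcs : HasCompactSupport u)
    (hsupp : tsupport u ⊆ halfSpace i) (s : ℝ) :
    IntegrableOn (fun x => u x ^ 2 * x i ^ s) (halfSpace i) := by
  have hcont : ContinuousOn (fun x => u x ^ 2 * x i ^ s) (tsupport u) :=
    (hu.pow 2).continuousOn.mul <| ContinuousOn.rpow_const (by fun_prop) fun x hx =>
      .inl (ne_of_gt (hsupp hx))
  refine Integrable.integrableOn ((integrableOn_iff_integrable_of_support_subset ?_).mp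
    (hcont.integrableOn_compact hcs))
  intro x hx
  exact subset_tsupport u fun hux => hx (by simp [hux])

theorem integrable_abs_rpow_of_hasCompactSupport {X : Type*} [TopologicalSpace X]
    [MeasurableSpace X] [OpensMeasurableSpace X] {μ : Measure X} [IsFiniteMeasureOnCompacts μ]
    {f : X → ℝ} (hf : Continuous f) (hcs : HasCompactSupport f) {q : ℝ} (hq : 0 < q) :
    Integrable (fun x => |f x| ^ q) μ :=
  (hf.abs.rpow_const fun _ => .inr hq.le).integrable_of_hasCompactSupport
    (hcs.comp_left (g := fun t => |t| ^ q) (by simp [Real.zero_rpow hq.ne']))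

theorem kappa_eq_transversalConst_mul :
    kappa n α = transversalConst n α *
      ((eulerBeta ((1 + α) / 2) ((2 - α) / 2) - 2 ^ α) / (α * 2 ^ α)) :=
  rfl

end HalfSpace

theorem fractional_hardy_sobolev_mazya_halfspace_general {n : ℕ} (hn : 2 ≤ n) (i : Fin n) {α : ℝ}
    (hα1 : 1 < α) (hα2 : α < 2) :
    ∃ c : ℝ, 0 < c ∧ ∀ u : EuclideanSpace ℝ (Fin n) → ℝ, Measurable u →
      IntegrableOn (fun x => u x ^ 2 * x i ^ (-α)) (halfSpace i) →
      IntegrableOn (fun x => |u x| ^ sobolevExponent n α) (halfSpace i) →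
      energy n α (halfSpace i) u ≥
        ENNReal.ofReal (kappa n α * ∫ x in halfSpace i, u x ^ 2 * x i ^ (-α)) +
        ENNReal.ofReal (c * (∫ x in halfSpace i, |u x| ^ sobolevExponent n α) ^
          (2 / sobolevExponent n α)) := by
  have hαn : α < n := hα2.trans_le (by exact_mod_cast hn)
  refine ⟨sobolevConst n α, sobolevConst_pos, fun u hu hardy_int sobolev_int => ?_⟩
  have hardy_integral_nonneg : 0 ≤ ∫ x in halfSpace i, u x ^ 2 * x i ^ (-α) :=
    setIntegral_nonneg (measurableSet_halfSpace i) fun x hx =>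
      mul_nonneg (sq_nonneg _) (Real.rpow_nonneg (le_of_lt hx) _)
  have hardy_eq := hardyIntegral_eq_ofReal_integral hardy_int
  have hardy_le := setLIntegral_groundStateDensity_add_le_energy (β := (α - 1) / 2)
    (by linarith) (by linarith) hu (hardy_eq ▸ ENNReal.ofReal_ne_top)
  have sobolev_le := sobolevConst_mul_le_setLIntegral_ratioPairs
    (h := fun x => x i ^ ((α - 1) / 2)) (by linarith) hαn (by fun_prop)
    (fun x hx => Real.rpow_pos_of_pos hx _)
    (fun x y hx hxy => Real.rpow_le_rpow hx.le hxy.le (by linarith)) hu sobolev_int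
  rw [truncatedHardyConst_one hα1 hα2,
    ← ENNReal.ofReal_mul (transversalConst_nonneg (by linarith) (by lia)),
    ← kappa_eq_transversalConst_mul, hardy_eq, mul_comm (ENNReal.ofReal _),
    ← ENNReal.ofReal_mul' hardy_integral_nonneg] at hardy_le
  exact (add_comm _ _).trans_le ((add_le_add_left sobolev_le _).trans hardy_le)

/-- Fractional Hardy–Sobolev–Maz'ya inequality for the upper half-space
`Π = ℝ^{n-1} × (0,∞)`. -/
theorem fractional_hardy_sobolev_mazya_halfspace (n : ℕ) (hn : 2 ≤ n) (α : ℝ)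
    (hα1 : 1 < α) (hα2 : α < 2) :
    ∃ c : ℝ, 0 < c ∧ ∀ u : EuclideanSpace ℝ (Fin n) → ℝ,
      Continuous u → HasCompactSupport u →
      tsupport u ⊆ {x : EuclideanSpace ℝ (Fin n) | 0 < x ⟨n - 1, by omega⟩} →
      energy n α {x : EuclideanSpace ℝ (Fin n) | 0 < x ⟨n - 1, by omega⟩} u ≥
        ENNReal.ofReal (kappa n α *
          ∫ x in {x : EuclideanSpace ℝ (Fin n) | 0 < x ⟨n - 1, by omega⟩},
            (u x) ^ 2 * (x ⟨n - 1, by omega⟩) ^ (-α)) +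
        ENNReal.ofReal (c *
          (∫ x in {x : EuclideanSpace ℝ (Fin n) | 0 < x ⟨n - 1, by omega⟩},
            |u x| ^ ((2 * n) / ((n : ℝ) - α))) ^ (2 / ((2 * n) / ((n : ℝ) - α)))) := by
  obtain ⟨c, hc, h⟩ := fractional_hardy_sobolev_mazya_halfspace_general hn ⟨n - 1, by omega⟩ hα1 hα2
  exact ⟨c, hc, fun u hu hcs hsupp => h u hu.measurable
    (integrableOn_halfSpace_sq_mul_rpow hu hcs hsupp _)
    (integrable_abs_rpow_of_hasCompactSupport hu hcs
      (sobolevExponent_pos (by lia) (hα2.trans_le (by exact_mod_cast hn)))).integrableOn⟩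
end

section
/- Let $1<\alpha<2$, $n\geq 2$, and let $B\subset\mathbb{R}^n$ be the open unit ball. Let $w(x)=(1-|x|^2)^{(\alpha-1)/2}$ for $x\in B$. There exists a constant $c_3=c_3(\alpha,n)>0$ such that for every continuous function $u$ with compact support in $B$: $\mathcal{E}_B(u) \geq \frac{1}{2}\int_B\int_B\left(\frac{u(x)}{w(x)}-\frac{u(y)}{w(y)}\right)^2\frac{w(x)w(y)}{|x-y|^{n+\alpha}}\,dx\,dy + 2^{\alpha}\kappa_{n,\alpha}\int_B u^2(x)(1-|x|^2)^{-\alpha}\,dx + c_3\int_B u^2(x)(1-|x|^2)^{-\alpha+1}\,dx$. -/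
open MeasureTheory Metric Set Filter
open scoped ENNReal Topology

/-- The weight `w(x) = (1 - |x|²)^{(α-1)/2}` on the unit ball. -/
noncomputable def w (n : ℕ) (α : ℝ) (x : EuclideanSpace ℝ (Fin n)) : ℝ :=
  (1 - ‖x‖ ^ 2) ^ ((α - 1) / 2)

/-!
Over any region of pairs `(x, y)` which is invariant under exchanging `x` and `y`, the identity
`(u x - u y)² = (u x / w x - u y / w y)² w x w y + u x² (1 - w y / w x) + u y² (1 - w x / w y)`
reduces the theorem to a lower bound, for each `x`, of `∫ (1 - w y / w x) |x - y|^(-n - α) dy`.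

Take for region the pairs whose distance `d` in the Beltrami–Klein model of hyperbolic space
satisfies `tanh d > 1 / A`. It keeps away from the singularity `x = y`, it is symmetric, and it
meets every chord of the ball through `x` in intervals on which the radial integrals of the kernel,
with and without the factor `w y`, are explicit. Adding the contributions of the opposite directions
`h` and `-h` and using the convexity of `t ↦ t ^ α` bounds the integrand of the remaining integral
over the sphere from below by a multiple of `|⟪x / |x|, h⟫| ^ α`, whose integral produces the
constant `κ`, plus a positive remainder, up to an error which does not depend on `h` and vanishes as
`A → ∞`.
-/

section GammaAndBeta

theorem Gamma_mul_Gamma_le_of_convexCombo {s t a b : ℝ} (hs : 0 < s) (ht : 0 < t)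
    (ha : 0 < a) (hb : 0 < b) (hab : a + b = 1) :
    Real.Gamma (a * s + b * t) * Real.Gamma (b * s + a * t) ≤ Real.Gamma s * Real.Gamma t := by
  have hΓs := Real.Gamma_pos_of_pos hs
  have hΓt := Real.Gamma_pos_of_pos ht
  calc Real.Gamma (a * s + b * t) * Real.Gamma (b * s + a * t)
      ≤ (Real.Gamma s ^ a * Real.Gamma t ^ b) * (Real.Gamma s ^ b * Real.Gamma t ^ a) := by
        refine mul_le_mul ?_ ?_ (Real.Gamma_nonneg_of_nonneg (by positivity)) (by positivity)
        · exact Real.Gamma_mul_add_mul_le_rpow_Gamma_mul_rpow_Gamma hs ht ha hb hab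
        · exact Real.Gamma_mul_add_mul_le_rpow_Gamma_mul_rpow_Gamma hs ht hb ha (by linarith)
    _ = Real.Gamma s ^ (a + b) * Real.Gamma t ^ (a + b) := by
        rw [Real.rpow_add hΓs, Real.rpow_add hΓt]; ring
    _ = Real.Gamma s * Real.Gamma t := by simp only [hab, Real.rpow_one]

/-- By the duplication formula the claim is `Γ(1 - a) Γ(1) ≤ Γ(1 + a) Γ(1 - 2a)` with
`a = (α - 1) / 2`, an instance of log-convexity. -/
theorem two_rpow_le_eulerBeta {α : ℝ} (hα₁ : 1 ≤ α) (hα₂ : α < 2) :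
    (2 : ℝ) ^ α ≤ eulerBeta ((1 + α) / 2) ((2 - α) / 2) := by
  obtain ⟨a, rfl⟩ : ∃ a, α = 2 * a + 1 := ⟨(α - 1) / 2, by ring⟩
  have hΓ : 0 < Real.Gamma (1 - a) := Real.Gamma_pos_of_pos (by linarith)
  have log_convexity : Real.Gamma (1 - a) ≤ Real.Gamma (1 + a) * Real.Gamma (1 - 2 * a) := by
    have h := Gamma_mul_Gamma_le_of_convexCombo (s := 1 + a) (t := 1 - 2 * a) (a := 1 / 3)
      (b := 2 / 3) (by linarith) (by linarith) (by norm_num) (by norm_num) (by norm_num)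
    rwa [show 1 / 3 * (1 + a) + 2 / 3 * (1 - 2 * a) = 1 - a by ring,
      show 2 / 3 * (1 + a) + 1 / 3 * (1 - 2 * a) = 1 by ring, Real.Gamma_one, mul_one] at h
  have duplication : Real.Gamma (1 / 2 - a) * Real.Gamma (1 - a) =
      Real.Gamma (1 - 2 * a) * 2 ^ (2 * a) * √Real.pi := by
    have h := Real.Gamma_mul_Gamma_add_half (1 / 2 - a)
    rwa [show 1 / 2 - a + 1 / 2 = 1 - a by ring, show 2 * (1 / 2 - a) = 1 - 2 * a by ring,
      show 1 - (1 - 2 * a) = 2 * a by ring] at h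
  have key : 2 ^ (2 * a) * √Real.pi ≤ Real.Gamma (1 + a) * Real.Gamma (1 / 2 - a) := by
    refine le_of_mul_le_mul_right ?_ hΓ
    calc 2 ^ (2 * a) * √Real.pi * Real.Gamma (1 - a)
        ≤ 2 ^ (2 * a) * √Real.pi * (Real.Gamma (1 + a) * Real.Gamma (1 - 2 * a)) := by gcongr
      _ = Real.Gamma (1 + a) * Real.Gamma (1 / 2 - a) * Real.Gamma (1 - a) := by
          rw [mul_assoc (Real.Gamma (1 + a)), duplication]; ring
  have hden : Real.Gamma (1 + a + (1 / 2 - a)) = √Real.pi / 2 := by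
    rw [show 1 + a + (1 / 2 - a) = 1 / 2 + 1 by ring, Real.Gamma_add_one (by norm_num),
      Real.Gamma_one_half_eq]
    ring
  rw [eulerBeta, show (1 + (2 * a + 1)) / 2 = 1 + a by ring,
    show (2 - (2 * a + 1)) / 2 = 1 / 2 - a by ring, hden, le_div_iff₀ (by positivity),
    Real.rpow_add two_pos, Real.rpow_one]
  linarith

theorem lintegral_rpow_mul_one_sub_rpow {a b : ℝ} (ha : 0 < a) (hb : 0 < b) :
    ∫⁻ x in Ioo (0 : ℝ) 1, ENNReal.ofReal (x ^ (a - 1) * (1 - x) ^ (b - 1)) =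
      ENNReal.ofReal (eulerBeta a b) := by
  have hβ : 0 < eulerBeta a b := ProbabilityTheory.beta_pos ha hb
  have h : ENNReal.ofReal (1 / eulerBeta a b) *
      ∫⁻ x in Ioo (0 : ℝ) 1, ENNReal.ofReal (x ^ (a - 1) * (1 - x) ^ (b - 1)) = 1 := by
    rw [← lintegral_const_mul _ (by fun_prop), ← ProbabilityTheory.lintegral_betaPDF_eq_one ha hb,
      ProbabilityTheory.lintegral_betaPDF]
    refine lintegral_congr fun x => ?_
    rw [← ENNReal.ofReal_mul (by positivity), mul_assoc]
    rfl
  rw [one_div, ENNReal.ofReal_inv_of_pos hβ] at h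
  have hβ' : ENNReal.ofReal (eulerBeta a b) ≠ 0 := (ENNReal.ofReal_pos.2 hβ).ne'
  rw [← mul_one (ENNReal.ofReal (eulerBeta a b)), ← h, ← mul_assoc,
    ENNReal.mul_inv_cancel hβ' ENNReal.ofReal_ne_top, one_mul]

theorem image_inv_sq_Ioi_one : (fun s : ℝ => (s ^ 2)⁻¹) '' Ioi 1 = Ioo 0 1 := by
  ext x
  constructor
  · rintro ⟨s, hs, rfl⟩
    exact ⟨by have := one_pos.trans hs.out; positivity,
      inv_lt_one_of_one_lt₀ (one_lt_pow₀ hs two_ne_zero)⟩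
  · rintro ⟨hx₀, hx₁⟩
    refine ⟨√x⁻¹, ?_, by simp only [Real.sq_sqrt (inv_nonneg.2 hx₀.le), inv_inv]⟩
    exact Real.lt_sqrt_of_sq_lt (by simpa using (one_lt_inv₀ hx₀).2 hx₁)

theorem lintegral_sq_sub_one_rpow {b : ℝ} (hb₀ : 0 < b) (hb₁ : b < 1 / 2) :
    ∫⁻ s in Ioi (1 : ℝ), ENNReal.ofReal ((s ^ 2 - 1) ^ (b - 1)) =
      ENNReal.ofReal (eulerBeta (1 / 2 - b) b / 2) := by
  have hderiv : ∀ s ∈ Ioi (1 : ℝ),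
      HasDerivWithinAt (fun s : ℝ => (s ^ 2)⁻¹) (-(2 * s ^ (-3 : ℝ))) (Ioi 1) s := by
    intro s hs
    have hs₀ : (0 : ℝ) < s := one_pos.trans hs
    refine (((hasDerivAt_pow 2 s).inv (by positivity)).congr_deriv ?_).hasDerivWithinAt
    rw [Real.rpow_neg hs₀.le, show (3 : ℝ) = (3 : ℕ) by norm_num, Real.rpow_natCast]
    field_simp
    push_cast
    ring
  have hanti : AntitoneOn (fun s : ℝ => (s ^ 2)⁻¹) (Ioi 1) := by
    intro s hs t _ hst
    have := one_pos.trans hs.out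
    simp only
    gcongr
  have hintegrand : ∀ s ∈ Ioi (1 : ℝ), ENNReal.ofReal (- -(2 * s ^ (-3 : ℝ))) * ENNReal.ofReal
      ((s ^ 2)⁻¹ ^ (1 / 2 - b - 1) * (1 - (s ^ 2)⁻¹) ^ (b - 1)) =
      2 * ENNReal.ofReal ((s ^ 2 - 1) ^ (b - 1)) := by
    intro s hs
    have hs₀ : (0 : ℝ) < s := one_pos.trans hs
    have hs₁ : 0 < s ^ 2 - 1 := sub_pos.2 (one_lt_pow₀ hs two_ne_zero)
    rw [neg_neg, ← ENNReal.ofReal_mul (by positivity), ← ENNReal.ofReal_ofNat 2,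
      ← ENNReal.ofReal_mul zero_le_two,
      show 1 - (s ^ 2)⁻¹ = (s ^ 2 - 1) * (s ^ 2)⁻¹ by field_simp,
      Real.mul_rpow hs₁.le (by positivity)]
    congr 1
    have : s ^ (-3 : ℝ) * ((s ^ 2)⁻¹ ^ (1 / 2 - b - 1) * (s ^ 2)⁻¹ ^ (b - 1)) = 1 := by
      rw [← Real.rpow_add (by positivity), ← Real.rpow_natCast, ← Real.rpow_neg hs₀.le,
        ← Real.rpow_mul hs₀.le, ← Real.rpow_add hs₀]
      ring_nf
      exact Real.rpow_zero s
    linear_combination 2 * (s ^ 2 - 1) ^ (b - 1) * this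
  have h := lintegral_rpow_mul_one_sub_rpow (sub_pos.2 hb₁) hb₀
  rw [← image_inv_sq_Ioi_one,
    lintegral_image_eq_lintegral_deriv_mul_of_antitoneOn measurableSet_Ioi hderiv hanti,
    setLIntegral_congr_fun measurableSet_Ioi hintegrand, lintegral_const_mul _ (by fun_prop)] at h
  rw [ENNReal.ofReal_div_of_pos two_pos, ENNReal.ofReal_ofNat, ← h, mul_comm,
    ENNReal.mul_div_cancel_right two_ne_zero ENNReal.ofNat_ne_top]

theorem integrableOn_sq_sub_one_rpow {α : ℝ} (hα₁ : 1 < α) (hα₂ : α < 2) :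
    IntegrableOn (fun s : ℝ => (s ^ 2 - 1) ^ ((α - 1) / 2 - 1)) (Ioi 1) := by
  refine (lintegral_ofReal_ne_top_iff_integrable
    (Measurable.aestronglyMeasurable (by fun_prop)) ?_).1 ?_
  · refine ae_restrict_of_forall_mem measurableSet_Ioi fun s hs => Real.rpow_nonneg ?_ _
    exact (sub_pos.2 (one_lt_pow₀ hs two_ne_zero)).le
  · rw [lintegral_sq_sub_one_rpow (by linarith) (by linarith)]
    exact ENNReal.ofReal_ne_top

theorem integral_sq_sub_one_rpow {α : ℝ} (hα₁ : 1 < α) (hα₂ : α < 2) :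
    2 * (α - 1) * ∫ s in Ioi (1 : ℝ), (s ^ 2 - 1) ^ ((α - 1) / 2 - 1) =
      eulerBeta ((1 + α) / 2) ((2 - α) / 2) := by
  have hnonneg : 0 ≤ᵐ[volume.restrict (Ioi 1)] fun s : ℝ => (s ^ 2 - 1) ^ ((α - 1) / 2 - 1) :=
    ae_restrict_of_forall_mem measurableSet_Ioi fun s hs =>
      Real.rpow_nonneg (sub_pos.2 (one_lt_pow₀ hs two_ne_zero)).le _
  have hβ : 0 < eulerBeta (1 / 2 - (α - 1) / 2) ((α - 1) / 2) :=
    ProbabilityTheory.beta_pos (by linarith) (by linarith)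
  rw [integral_eq_lintegral_of_nonneg_ae hnonneg (Measurable.aestronglyMeasurable (by fun_prop)),
    lintegral_sq_sub_one_rpow (by linarith) (by linarith), ENNReal.toReal_ofReal (by positivity)]
  unfold eulerBeta
  rw [show (1 + α) / 2 + (2 - α) / 2 = 1 / 2 + 1 by ring, Real.Gamma_add_one (by norm_num),
    sub_add_cancel, show (1 + α) / 2 = (α - 1) / 2 + 1 by ring, Real.Gamma_add_one (by linarith),
    show (2 - α) / 2 = 1 / 2 - (α - 1) / 2 by ring]
  ring

end GammaAndBeta

section Convexity

theorem two_lt_two_rpow {α : ℝ} (hα : 1 < α) : (2 : ℝ) < 2 ^ α := by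
  simpa only [Real.rpow_one] using Real.rpow_lt_rpow_of_exponent_lt one_lt_two hα

theorem two_mul_rpow_le_add_rpow_add_sub_rpow {α A τ : ℝ} (hα : 1 ≤ α) (hτ : |τ| ≤ A) :
    2 * A ^ α ≤ (A + τ) ^ α + (A - τ) ^ α := by
  obtain ⟨hτ₁, hτ₂⟩ := abs_le.1 hτ
  have h := (convexOn_rpow hα).2 (x := A + τ) (y := A - τ) (mem_Ici.2 (by linarith))
    (mem_Ici.2 (by linarith)) (show (0 : ℝ) ≤ 1 / 2 by norm_num)
    (show (0 : ℝ) ≤ 1 / 2 by norm_num) (by norm_num)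
  simp only [smul_eq_mul] at h
  rw [show 1 / 2 * (A + τ) + 1 / 2 * (A - τ) = A by ring] at h
  linarith

theorem one_add_rpow_add_one_sub_rpow_le {α t : ℝ} (hα : 1 ≤ α) (ht : |t| ≤ 1) :
    (1 + t) ^ α + (1 - t) ^ α ≤ 2 ^ α - (2 ^ α - 2) / 2 * (1 - t ^ 2) := by
  wlog ht₀ : 0 ≤ t generalizing t
  · have h := this (t := -t) (by rwa [abs_neg]) (by linarith)
    rw [sub_neg_eq_add, neg_sq, ← sub_eq_add_neg] at h
    linarith
  have ht₁ : 0 ≤ 1 - t := sub_nonneg.2 ((le_abs_self t).trans ht)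
  have hconv := convexOn_rpow hα
  have chord_up : (1 + t) ^ α ≤ (1 - t) + t * 2 ^ α := by
    have h := hconv.2 (x := 1) (y := 2) (by simp) (by simp) ht₁ ht₀ (by ring)
    simp only [smul_eq_mul, Real.one_rpow, mul_one] at h
    rwa [show 1 - t + t * 2 = 1 + t by ring] at h
  have chord_down : (1 - t) ^ α ≤ 1 - t := by
    have h := hconv.2 (x := 1) (y := 0) (by simp) (by simp) ht₁ ht₀ (by ring)
    simpa only [smul_eq_mul, Real.one_rpow, mul_one, mul_zero, add_zero,
      Real.zero_rpow (show α ≠ 0 by linarith)] using h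
  have htwo : (2 : ℝ) ≤ 2 ^ α := by
    simpa only [Real.rpow_one] using Real.rpow_le_rpow_of_exponent_le one_le_two hα
  nlinarith [mul_nonneg (sub_nonneg.2 htwo) (sq_nonneg (1 - t))]

theorem add_rpow_add_sub_rpow_le {α R τ : ℝ} (hα : 1 ≤ α) (hR : 0 < R) (hτ : |τ| ≤ R) :
    (R + τ) ^ α + (R - τ) ^ α ≤
      2 ^ α * R ^ α - (2 ^ α - 2) / 2 * (R ^ (α - 2) * (R ^ 2 - τ ^ 2)) := by
  obtain ⟨t, rfl⟩ : ∃ t, τ = R * t := ⟨τ / R, by field_simp⟩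
  have ht : |t| ≤ 1 := by
    rw [abs_mul, abs_of_pos hR] at hτ
    exact le_of_mul_le_mul_left (by linarith) hR
  obtain ⟨ht₁, ht₂⟩ := abs_le.1 ht
  have hscale : R ^ (α - 2) * (R ^ 2 - (R * t) ^ 2) = R ^ α * (1 - t ^ 2) := by
    rw [Real.rpow_sub hR, Real.rpow_two]
    field_simp
  rw [hscale, show R + R * t = R * (1 + t) by ring, show R - R * t = R * (1 - t) by ring,
    Real.mul_rpow hR.le (by linarith), Real.mul_rpow hR.le (by linarith)]
  nlinarith [one_add_rpow_add_one_sub_rpow_le hα ht, Real.rpow_pos_of_pos hR α]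

end Convexity

section TruncatedMass

/-- `∫₁^A (s² - 1)^((α - 1)/2) ds`: the radial integrals of the kernel against the ground state
`w`, truncated at level `A`, are multiples of it. -/
noncomputable def truncMass (α A : ℝ) : ℝ :=
  ∫ s in (1 : ℝ)..A, (s ^ 2 - 1) ^ ((α - 1) / 2)

/-- The part beyond `A` of the convergent integral
`2 (α - 1) ∫₁^∞ (s² - 1)^((α - 3)/2) ds = B((1 + α)/2, (2 - α)/2)`: the error made in the ground
state identity by truncating at level `A`. -/
noncomputable def betaTail (α A : ℝ) : ℝ :=
  2 * (α - 1) * ∫ s in Ioi A, (s ^ 2 - 1) ^ ((α - 1) / 2 - 1)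

variable {α A : ℝ}

theorem truncMass_nonneg (hA : 1 ≤ A) : 0 ≤ truncMass α A :=
  intervalIntegral.integral_nonneg hA fun _ hs =>
    Real.rpow_nonneg (sub_nonneg.2 (one_le_pow₀ hs.1)) _

theorem betaTail_nonneg (hα : 1 ≤ α) (hA : 1 ≤ A) : 0 ≤ betaTail α A := by
  refine mul_nonneg (by linarith) (setIntegral_nonneg measurableSet_Ioi fun s hs => ?_)
  exact Real.rpow_nonneg (sub_nonneg.2 (one_le_pow₀ (hA.trans hs.out.le))) _

theorem tendsto_betaTail_atTop (hα₁ : 1 < α) (hα₂ : α < 2) :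
    Tendsto (betaTail α) atTop (𝓝 0) := by
  have h := tendsto_setIntegral_of_antitone (μ := volume) (s := fun A : ℝ => Ioi A)
    (fun _ => measurableSet_Ioi) (fun _ _ hst => Ioi_subset_Ioi hst)
    ⟨1, integrableOn_sq_sub_one_rpow hα₁ hα₂⟩
  have hempty : ⋂ A : ℝ, Ioi A = ∅ :=
    eq_empty_of_forall_notMem fun s hs => lt_irrefl s (mem_iInter.1 hs s)
  rw [hempty, setIntegral_empty] at h
  have h' := h.const_mul (2 * (α - 1))
  rwa [mul_zero] at h'

theorem integral_sq_sub_one_rpow_eq_sub_betaTail (hα₁ : 1 < α) (hα₂ : α < 2) (hA : 1 ≤ A) :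
    2 * (α - 1) * ∫ s in (1 : ℝ)..A, (s ^ 2 - 1) ^ ((α - 1) / 2 - 1) =
      eulerBeta ((1 + α) / 2) ((2 - α) / 2) - betaTail α A := by
  have hint := integrableOn_sq_sub_one_rpow hα₁ hα₂
  rw [← integral_sq_sub_one_rpow hα₁ hα₂, betaTail, ← mul_sub,
    ← intervalIntegral.integral_Ioi_sub_Ioi hint hA]

theorem continuous_sq_sub_one_rpow (hα : 1 ≤ α) :
    Continuous fun s : ℝ => (s ^ 2 - 1) ^ ((α - 1) / 2) :=
  ((continuous_pow 2).sub continuous_const).rpow_const fun _ => .inr (by linarith)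

theorem ofReal_truncMass (hα : 1 ≤ α) (hA : 1 ≤ A) :
    ENNReal.ofReal (truncMass α A) =
      ∫⁻ s in Ioo 1 A, ENNReal.ofReal ((s ^ 2 - 1) ^ ((α - 1) / 2)) := by
  rw [truncMass, intervalIntegral.integral_of_le hA, integral_Ioc_eq_integral_Ioo,
    ofReal_integral_eq_lintegral_ofReal]
  · exact (intervalIntegrable_iff_integrableOn_Ioo_of_le hA).1
      ((continuous_sq_sub_one_rpow hα).intervalIntegrable 1 A)
  · exact ae_restrict_of_forall_mem measurableSet_Ioo fun _ hs =>
      Real.rpow_nonneg (sub_nonneg.2 (one_le_pow₀ hs.1.le)) _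

theorem hasDerivAt_mul_sq_sub_one_rpow {s : ℝ} (hs : 1 < s) :
    HasDerivAt (fun s : ℝ => s * (s ^ 2 - 1) ^ ((α - 1) / 2))
      (α * (s ^ 2 - 1) ^ ((α - 1) / 2) + (α - 1) * (s ^ 2 - 1) ^ ((α - 1) / 2 - 1)) s := by
  have hs₁ : s ^ 2 - 1 ≠ 0 := (sub_pos.2 (one_lt_pow₀ hs two_ne_zero)).ne'
  refine ((hasDerivAt_id s).mul
    (((hasDerivAt_pow 2 s).sub_const 1).rpow_const (.inl hs₁))).congr_deriv ?_
  have hpow : (s ^ 2 - 1) ^ ((α - 1) / 2) = (s ^ 2 - 1) ^ ((α - 1) / 2 - 1) * (s ^ 2 - 1) := by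
    rw [Real.rpow_sub_one hs₁, div_mul_cancel₀ _ hs₁]
  rw [hpow]
  simp only [id, Nat.cast_ofNat]
  ring

/-- Integrate the derivative of `s (s² - 1)^((α - 1)/2)`. -/
theorem two_mul_truncMass_le (hα₁ : 1 < α) (hα₂ : α < 2) (hA : 1 ≤ A) :
    2 * α * truncMass α A ≤
      2 * A ^ α - (eulerBeta ((1 + α) / 2) ((2 - α) / 2) - betaTail α A) := by
  have hint₁ : IntervalIntegrable (fun s : ℝ => (s ^ 2 - 1) ^ ((α - 1) / 2)) volume 1 A :=
    (continuous_sq_sub_one_rpow hα₁.le).intervalIntegrable 1 A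
  have hint₂ : IntervalIntegrable (fun s : ℝ => (s ^ 2 - 1) ^ ((α - 1) / 2 - 1)) volume 1 A :=
    (intervalIntegrable_iff_integrableOn_Ioc_of_le hA).2
      ((integrableOn_sq_sub_one_rpow hα₁ hα₂).mono_set Ioc_subset_Ioi_self)
  have hftc := intervalIntegral.integral_eq_sub_of_hasDerivAt_of_le hA
    (f := fun s : ℝ => s * (s ^ 2 - 1) ^ ((α - 1) / 2))
    (continuous_id.mul (continuous_sq_sub_one_rpow hα₁.le)).continuousOn
    (fun _ hs => hasDerivAt_mul_sq_sub_one_rpow hs.1)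
    ((hint₁.const_mul α).add (hint₂.const_mul (α - 1)))
  rw [intervalIntegral.integral_add (hint₁.const_mul _) (hint₂.const_mul _),
    intervalIntegral.integral_const_mul, intervalIntegral.integral_const_mul, one_pow, sub_self,
    Real.zero_rpow (by linarith : (α - 1) / 2 ≠ 0), mul_zero, sub_zero, ← truncMass] at hftc
  have hboundary : A * (A ^ 2 - 1) ^ ((α - 1) / 2) ≤ A ^ α := by
    have hA₀ : 0 < A := by linarith
    calc A * (A ^ 2 - 1) ^ ((α - 1) / 2) ≤ A * (A ^ 2) ^ ((α - 1) / 2) := by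
          have : 0 ≤ A ^ 2 - 1 := sub_nonneg.2 (one_le_pow₀ hA)
          gcongr
          linarith
      _ = A ^ α := by
          rw [← Real.rpow_two, ← Real.rpow_mul hA₀.le, mul_div_cancel₀ _ two_ne_zero,
            ← Real.rpow_one_add' hA₀.le (by linarith), add_sub_cancel]
  linarith [integral_sq_sub_one_rpow_eq_sub_betaTail hα₁ hα₂ hA]

end TruncatedMass

section Chord

variable {α A R τ : ℝ}

/-- The parameters `ρ > 0` of the points at distance `ρ` from a given point on a chord of length
`2R`, the given point lying at signed distance `τ` from the midpoint, whose hyperbolic distance `d`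
to the given point satisfies `tanh d > 1 / A`. -/
def truncChord (R τ A : ℝ) : Set ℝ :=
  Ioo ((R ^ 2 - τ ^ 2) / (A * R + τ)) (R - τ)

theorem mul_add_pos_of_abs_lt (hτ : |τ| < R) {s : ℝ} (hs : 1 ≤ s) : 0 < s * R + τ := by
  nlinarith [neg_lt_of_abs_lt hτ, (abs_nonneg τ).trans_lt hτ]

theorem sq_sub_sq_pos_of_abs_lt (hτ : |τ| < R) : 0 < R ^ 2 - τ ^ 2 :=
  sub_pos.2 (sq_lt_sq' (neg_lt_of_abs_lt hτ) (lt_of_abs_lt hτ))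

theorem truncChord_subset_Ioi (hτ : |τ| < R) (hA : 1 ≤ A) : truncChord R τ A ⊆ Ioi 0 :=
  Ioo_subset_Ioi_self.trans <| Ioi_subset_Ioi
    (div_pos (sq_sub_sq_pos_of_abs_lt hτ) (mul_add_pos_of_abs_lt hτ hA)).le

theorem mem_truncChord_iff (hτ : |τ| < R) (hA : 1 ≤ A) {r : ℝ} (hr : 0 < r) :
    r ∈ truncChord R τ A ↔ 0 < R ^ 2 - (τ + r) ^ 2 ∧
      (R ^ 2 - τ ^ 2 - r * τ) ^ 2 < A ^ 2 * (R ^ 2 * r ^ 2) := by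
  have hR : 0 < R := (abs_nonneg τ).trans_lt hτ
  have hball : 0 < R ^ 2 - (τ + r) ^ 2 ↔ r < R - τ := by
    rw [show R ^ 2 - (τ + r) ^ 2 = (R - τ - r) * (R + τ + r) by ring,
      mul_pos_iff_of_pos_right (by linarith [neg_lt_of_abs_lt hτ]), sub_pos]
  rw [hball, truncChord, mem_Ioo, div_lt_iff₀ (mul_add_pos_of_abs_lt hτ hA), and_comm]
  refine and_congr_right fun hr' => ?_
  have hpos : 0 ≤ R ^ 2 - τ ^ 2 - r * τ := by
    nlinarith [mul_pos (show 0 < R + τ by linarith [neg_lt_of_abs_lt hτ]) (sub_pos.2 hr')]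
  rw [show A ^ 2 * (R ^ 2 * r ^ 2) = (A * R * r) ^ 2 by ring,
    sq_lt_sq₀ hpos (by positivity)]
  constructor <;> intro h <;> linarith

theorem lintegral_truncChord_rpow (hα : 0 < α) (hτ : |τ| < R) (hA : 1 ≤ A) :
    ∫⁻ r in truncChord R τ A, ENNReal.ofReal (r ^ (-1 - α)) =
      ENNReal.ofReal ((R ^ 2 - τ ^ 2) ^ (-α) / α * ((A * R + τ) ^ α - (R + τ) ^ α)) := by
  have hD := sq_sub_sq_pos_of_abs_lt hτ
  have hAR := mul_add_pos_of_abs_lt hτ hA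
  have hR₁ : 0 < R + τ := by linarith [neg_lt_of_abs_lt hτ]
  have hR₂ : R - τ = (R ^ 2 - τ ^ 2) / (R + τ) := by field_simp; ring
  have hlow : 0 < (R ^ 2 - τ ^ 2) / (A * R + τ) := div_pos hD hAR
  have hle : (R ^ 2 - τ ^ 2) / (A * R + τ) ≤ R - τ := by
    rw [hR₂]
    have : R ≤ A * R := le_mul_of_one_le_left ((abs_nonneg τ).trans hτ.le) hA
    gcongr
  have hnotMem : (0 : ℝ) ∉ uIcc ((R ^ 2 - τ ^ 2) / (A * R + τ)) (R - τ) := by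
    rw [uIcc_of_le hle]
    exact fun h => hlow.not_ge h.1
  have hrpow {b : ℝ} (hb : 0 < b) :
      ((R ^ 2 - τ ^ 2) / b) ^ (-α) = (R ^ 2 - τ ^ 2) ^ (-α) * b ^ α := by
    rw [Real.div_rpow hD.le hb.le, Real.rpow_neg hb.le, div_inv_eq_mul]
  have hint := (intervalIntegral.intervalIntegrable_rpow (μ := volume) (r := -1 - α)
    (.inr hnotMem))
  rw [truncChord, ← ofReal_integral_eq_lintegral_ofReal
      ((intervalIntegrable_iff_integrableOn_Ioo_of_le hle).1 hint)
      (ae_restrict_of_forall_mem measurableSet_Ioo fun r hr =>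
        Real.rpow_nonneg (hlow.trans hr.1).le _),
    ← integral_Ioc_eq_integral_Ioo, ← intervalIntegral.integral_of_le hle,
    integral_rpow (.inr ⟨by linarith, hnotMem⟩), show -1 - α + 1 = -α by ring, hrpow hAR, hR₂,
    hrpow hR₁]
  congr 1
  ring

theorem image_Ioo_eq_truncChord (hτ : |τ| < R) (hA : 1 ≤ A) :
    (fun s => (R ^ 2 - τ ^ 2) / (s * R + τ)) '' Ioo 1 A = truncChord R τ A := by
  have hR : 0 < R := (abs_nonneg τ).trans_lt hτ
  have hD := sq_sub_sq_pos_of_abs_lt hτ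
  have hR₁ : 0 < R + τ := by linarith [neg_lt_of_abs_lt hτ]
  have hR₂ : R - τ = (R ^ 2 - τ ^ 2) / (R + τ) := by field_simp; ring
  rw [truncChord, hR₂]
  ext r
  constructor
  · rintro ⟨s, hs, rfl⟩
    have hs_pos := mul_add_pos_of_abs_lt hτ hs.1.le
    have hsA := mul_lt_mul_of_pos_right hs.2 hR
    have hs₁ := mul_lt_mul_of_pos_right hs.1 hR
    exact ⟨div_lt_div_of_pos_left hD hs_pos (by linarith),
      div_lt_div_of_pos_left hD hR₁ (by linarith)⟩
  · intro hr
    have hr₀ : 0 < r := truncChord_subset_Ioi hτ hA (by rwa [truncChord, hR₂])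
    obtain ⟨h₁, h₂⟩ := hr
    rw [div_lt_comm₀ (mul_add_pos_of_abs_lt hτ hA) hr₀] at h₁
    rw [lt_div_comm₀ hr₀ hR₁] at h₂
    refine ⟨((R ^ 2 - τ ^ 2) / r - τ) / R, ⟨?_, ?_⟩, ?_⟩
    · rw [lt_div_iff₀ hR]; linarith
    · rw [div_lt_iff₀ hR]; linarith
    · simp only [div_mul_cancel₀ _ hR.ne', sub_add_cancel, div_div_cancel₀ hD.ne']

theorem chord_integrand_substitution {s : ℝ} (hτ : |τ| < R) (hs : 1 < s) :
    (R ^ 2 - τ ^ 2) * R / (s * R + τ) ^ 2 *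
        ((R ^ 2 - (τ + (R ^ 2 - τ ^ 2) / (s * R + τ)) ^ 2) ^ ((α - 1) / 2) *
          ((R ^ 2 - τ ^ 2) / (s * R + τ)) ^ (-1 - α)) =
      R ^ α * (R ^ 2 - τ ^ 2) ^ (-((α + 1) / 2)) * (s ^ 2 - 1) ^ ((α - 1) / 2) := by
  have hR : 0 < R := (abs_nonneg τ).trans_lt hτ
  have hb := mul_add_pos_of_abs_lt hτ hs.le
  have hD := sq_sub_sq_pos_of_abs_lt hτ
  set b := s * R + τ with hb_def
  set D := R ^ 2 - τ ^ 2 with hD_def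
  have hs₁ : 0 < s ^ 2 - 1 := sub_pos.2 (one_lt_pow₀ hs two_ne_zero)
  have hquad : R ^ 2 - (τ + D / b) ^ 2 = R ^ 2 * D * b⁻¹ ^ 2 * (s ^ 2 - 1) := by
    field_simp
    rw [hb_def, hD_def]
    ring
  have hsq {y : ℝ} (hy : 0 < y) : (y ^ 2) ^ ((α - 1) / 2) = y ^ (α - 1) := by
    rw [← Real.rpow_two, ← Real.rpow_mul hy.le, mul_div_cancel₀ _ two_ne_zero]
  have hbα : b⁻¹ ^ 2 * b⁻¹ ^ (α - 1) * b⁻¹ ^ (-1 - α) = 1 := by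
    rw [← Real.rpow_two, ← Real.rpow_add (by positivity), ← Real.rpow_add (by positivity),
      show 2 + (α - 1) + (-1 - α) = 0 by ring, Real.rpow_zero]
  have hRα : R * R ^ (α - 1) = R ^ α := by
    rw [mul_comm, Real.rpow_sub_one hR.ne', div_mul_cancel₀ _ hR.ne']
  have hDα : D * D ^ ((α - 1) / 2) * D ^ (-1 - α) = D ^ (-((α + 1) / 2)) := by
    nth_rw 1 [← Real.rpow_one D]
    rw [← Real.rpow_add hD, ← Real.rpow_add hD]
    ring_nf
  rw [hquad, Real.mul_rpow (by positivity) hs₁.le, Real.mul_rpow (by positivity) (by positivity),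
    Real.mul_rpow (by positivity) hD.le, hsq hR, hsq (inv_pos.2 hb), div_eq_mul_inv D b,
    Real.mul_rpow hD.le (by positivity), ← hRα, ← hDα, div_eq_mul_inv, ← inv_pow]
  linear_combination R * R ^ (α - 1) * (D * D ^ ((α - 1) / 2) * D ^ (-1 - α)) *
    (s ^ 2 - 1) ^ ((α - 1) / 2) * hbα

/-- Substitute `r = (R² - τ²) / (s R + τ)`, which turns `R² - (τ + r)²` into a multiple of
`r² (s² - 1)`. -/
theorem lintegral_truncChord_mul_rpow (hα : 1 < α) (hτ : |τ| < R) (hA : 1 ≤ A) :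
    ∫⁻ r in truncChord R τ A, ENNReal.ofReal
        ((R ^ 2 - (τ + r) ^ 2) ^ ((α - 1) / 2) * r ^ (-1 - α)) =
      ENNReal.ofReal (R ^ α * (R ^ 2 - τ ^ 2) ^ (-((α + 1) / 2)) * truncMass α A) := by
  have hR : 0 < R := (abs_nonneg τ).trans_lt hτ
  have hD := sq_sub_sq_pos_of_abs_lt hτ
  have hderiv : ∀ s ∈ Ioo 1 A, HasDerivWithinAt (fun s => (R ^ 2 - τ ^ 2) / (s * R + τ))
      (-((R ^ 2 - τ ^ 2) * R / (s * R + τ) ^ 2)) (Ioo 1 A) s := by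
    intro s hs
    have hs₀ := (mul_add_pos_of_abs_lt hτ hs.1.le).ne'
    refine ((((hasDerivAt_mul_const R).add_const τ).fun_inv hs₀).const_mul
      (R ^ 2 - τ ^ 2)).congr_deriv ?_ |>.hasDerivWithinAt
    ring
  have hanti : AntitoneOn (fun s => (R ^ 2 - τ ^ 2) / (s * R + τ)) (Ioo 1 A) := by
    intro s hs t _ hst
    have := mul_add_pos_of_abs_lt hτ hs.1.le
    simp only
    gcongr
  have hintegrand : ∀ s ∈ Ioo 1 A,
      ENNReal.ofReal (- -((R ^ 2 - τ ^ 2) * R / (s * R + τ) ^ 2)) * ENNReal.ofReal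
        ((R ^ 2 - (τ + (R ^ 2 - τ ^ 2) / (s * R + τ)) ^ 2) ^ ((α - 1) / 2) *
          ((R ^ 2 - τ ^ 2) / (s * R + τ)) ^ (-1 - α)) =
      ENNReal.ofReal (R ^ α * (R ^ 2 - τ ^ 2) ^ (-((α + 1) / 2))) *
        ENNReal.ofReal ((s ^ 2 - 1) ^ ((α - 1) / 2)) := by
    intro s hs
    rw [neg_neg, ← ENNReal.ofReal_mul (by positivity), ← ENNReal.ofReal_mul (by positivity),
      chord_integrand_substitution hτ hs.1]
  rw [← image_Ioo_eq_truncChord hτ hA,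
    lintegral_image_eq_lintegral_deriv_mul_of_antitoneOn measurableSet_Ioo hderiv hanti,
    setLIntegral_congr_fun measurableSet_Ioo hintegrand, lintegral_const_mul _ (by fun_prop),
    ← ofReal_truncMass hα.le hA, ← ENNReal.ofReal_mul (by positivity)]

end Chord

/-- Bound the integral by convexity: the terms `(A R ± τ)^α` from below, the terms
`(R ± τ)^α` from above. -/
theorem chord_pair_inequality {α A R τ c : ℝ} (hα₁ : 1 < α) (hα₂ : α < 2) (hA : 1 ≤ A)
    (hR₀ : 0 < R) (hR₁ : R ≤ 1) (hτ : |τ| ≤ R) (hc : |c| ≤ R) :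
    2 * α * R ^ α * truncMass α A +
        (eulerBeta ((1 + α) / 2) ((2 - α) / 2) - 2 ^ α) * |c| ^ α +
        (2 ^ α - 2) / 2 * (R ^ 2 - τ ^ 2) ≤
      ((A * R + τ) ^ α - (R + τ) ^ α) + ((A * R - τ) ^ α - (R - τ) ^ α) + betaTail α A := by
  set β := eulerBeta ((1 + α) / 2) ((2 - α) / 2)
  have hRα : R ^ α ≤ 1 := Real.rpow_le_one hR₀.le hR₁ (by linarith)
  have mass : R ^ α * (2 * α * truncMass α A) ≤ R ^ α * (2 * A ^ α - (β - betaTail α A)) := by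
    gcongr
    exact two_mul_truncMass_le hα₁ hα₂ hA
  have far_end : 2 * (A ^ α * R ^ α) ≤ (A * R + τ) ^ α + (A * R - τ) ^ α := by
    rw [← Real.mul_rpow (by linarith) hR₀.le]
    exact two_mul_rpow_le_add_rpow_add_sub_rpow hα₁.le
      (hτ.trans (le_mul_of_one_le_left hR₀.le hA))
  have near_end := add_rpow_add_sub_rpow_le hα₁.le hR₀ hτ
  have moment : (β - 2 ^ α) * |c| ^ α ≤ (β - 2 ^ α) * R ^ α := by
    have := sub_nonneg.2 (two_rpow_le_eulerBeta hα₁.le hα₂)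
    gcongr
  have remainder : (2 ^ α - 2) / 2 * (R ^ 2 - τ ^ 2) ≤
      (2 ^ α - 2) / 2 * (R ^ (α - 2) * (R ^ 2 - τ ^ 2)) := by
    have := two_lt_two_rpow hα₁
    have : 0 ≤ R ^ 2 - τ ^ 2 := sub_nonneg.2 (sq_le_sq' (neg_le_of_abs_le hτ) (le_of_abs_le hτ))
    gcongr
    exact le_mul_of_one_le_left this
        (Real.one_le_rpow_of_pos_of_le_one_of_nonpos hR₀ hR₁ (by linarith))
  have tail : R ^ α * betaTail α A ≤ betaTail α A :=
    mul_le_of_le_one_left (betaTail_nonneg hα₁.le hA) hRα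
  linarith

section PolarCoordinates

open scoped Pointwise

variable {E : Type*} [NormedAddCommGroup E] [NormedSpace ℝ E] [FiniteDimensional ℝ E]
  [MeasurableSpace E] [BorelSpace E] (μ : Measure E) [μ.IsAddHaarMeasure]

theorem lintegral_eq_lintegral_toSphere [Nontrivial E] {f : E → ℝ≥0∞} (hf : Measurable f) :
    ∫⁻ y, f y ∂μ = ∫⁻ h, (∫⁻ r in Ioi (0 : ℝ),
      ENNReal.ofReal (r ^ (Module.finrank ℝ E - 1)) * f (r • (h : E))) ∂μ.toSphere := by
  calc ∫⁻ y, f y ∂μ = ∫⁻ y : ({0}ᶜ : Set E), f y ∂(μ.comap (↑)) := by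
        rw [lintegral_subtype_comap (measurableSet_singleton _).compl, restrict_compl_singleton]
    _ = ∫⁻ p, f (p.2.1 • p.1.1) ∂μ.toSphere.prod (.volumeIoiPow (Module.finrank ℝ E - 1)) := by
        rw [← μ.measurePreserving_homeomorphUnitSphereProd.lintegral_comp_emb
          (Homeomorph.measurableEmbedding _)]
        refine lintegral_congr fun y => congrArg f ?_
        have hy : ‖(y : E)‖ ≠ 0 := norm_ne_zero_iff.2 y.2
        simp only [homeomorphUnitSphereProd_apply_snd_coe, homeomorphUnitSphereProd_apply_fst_coe,
          smul_smul, mul_inv_cancel₀ hy, one_smul]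
    _ = ∫⁻ h, (∫⁻ r, f (r.1 • h.1) ∂.volumeIoiPow (Module.finrank ℝ E - 1)) ∂μ.toSphere :=
        lintegral_prod _ (Measurable.aemeasurable (by fun_prop))
    _ = _ := by
        refine lintegral_congr fun h => ?_
        rw [Measure.volumeIoiPow,
          lintegral_withDensity_eq_lintegral_mul _ (by fun_prop) (by fun_prop),
          ← lintegral_subtype_comap measurableSet_Ioi]
        rfl

theorem measurePreserving_neg_toSphere :
    MeasurePreserving (fun h : sphere (0 : E) 1 => -h) μ.toSphere μ.toSphere := by
  refine ⟨by fun_prop, Measure.ext fun s hs => ?_⟩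
  have himage : ((↑) '' ((fun h : sphere (0 : E) 1 => -h) ⁻¹' s) : Set E) = -((↑) '' s) := by
    ext y
    constructor
    · rintro ⟨h, hh, rfl⟩
      exact ⟨-h, hh, rfl⟩
    · rintro ⟨h, hh, hy⟩
      exact ⟨-h, by simpa only [mem_preimage, neg_neg] using hh, neg_eq_iff_eq_neg.2 hy⟩
  have hcone (S : Set E) : Ioo (0 : ℝ) 1 • -S = -(Ioo (0 : ℝ) 1 • S) := by
    simp only [← image_neg_eq_neg]
    exact image_image2_right_comm fun r x => smul_neg r x
  rw [Measure.map_apply (by fun_prop) hs, Measure.toSphere_apply' _ hs,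
    Measure.toSphere_apply' _ (by exact hs.preimage (by fun_prop)), himage, hcone,
    Measure.measure_neg]

theorem lintegral_toSphere_eq_lintegral_even_part {f : sphere (0 : E) 1 → ℝ} (hf : Measurable f)
    (hf₀ : ∀ h, 0 ≤ f h) :
    ∫⁻ h, ENNReal.ofReal (f h) ∂μ.toSphere =
      ∫⁻ h, ENNReal.ofReal ((f h + f (-h)) / 2) ∂μ.toSphere := by
  have hneg : ∫⁻ h, ENNReal.ofReal (f (-h)) ∂μ.toSphere = ∫⁻ h, ENNReal.ofReal (f h) ∂μ.toSphere :=
    (measurePreserving_neg_toSphere μ).lintegral_comp hf.ennreal_ofReal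
  have hsplit (h : sphere (0 : E) 1) : ENNReal.ofReal ((f h + f (-h)) / 2) =
      (ENNReal.ofReal (f h) + ENNReal.ofReal (f (-h))) / 2 := by
    rw [ENNReal.ofReal_div_of_pos two_pos, ENNReal.ofReal_add (hf₀ _) (hf₀ _),
      ENNReal.ofReal_ofNat]
  simp_rw [hsplit, div_eq_mul_inv]
  rw [lintegral_mul_const' _ _ (ENNReal.inv_ne_top.2 two_ne_zero),
    lintegral_add_left hf.ennreal_ofReal, hneg, ← div_eq_mul_inv, ENNReal.add_div,
    ENNReal.add_halves]

end PolarCoordinates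

section SphereMoment

variable {E : Type*} [NormedAddCommGroup E] [InnerProductSpace ℝ E] [FiniteDimensional ℝ E]
  [MeasurableSpace E] [BorelSpace E]

theorem integral_prod_repr {ι : Type*} [Fintype ι] (b : OrthonormalBasis ι ℝ E) (f : ι → ℝ → ℝ) :
    ∫ y, ∏ i, f i (b.repr y i) = ∏ i, ∫ t, f i t := by
  rw [← integral_fintype_prod_volume_eq_prod,
    ← (PiLp.volume_preserving_ofLp ι).integral_comp
      (MeasurableEquiv.toLp 2 _).symm.measurableEmbedding,
    ← b.measurePreserving_repr.integral_comp b.repr.toHomeomorph.measurableEmbedding]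

theorem integral_abs_rpow_mul_exp_neg_sq {a : ℝ} (ha : -1 < a) :
    ∫ t : ℝ, |t| ^ a * Real.exp (-t ^ 2) = Real.Gamma ((1 + a) / 2) := by
  have hhalf := integral_rpow_mul_exp_neg_rpow two_pos ha
  simp only [Real.rpow_two] at hhalf
  have habs := integral_comp_abs (f := fun t : ℝ => t ^ a * Real.exp (-t ^ 2))
  simp only [sq_abs] at habs
  rw [habs, hhalf, add_comm a]
  ring

theorem integral_abs_inner_rpow_mul_exp_neg_norm_sq {a : ℝ} (ha : -1 < a) {e : E}
    (he : ‖e‖ = 1) :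
    ∫ y : E, |inner ℝ e y| ^ a * Real.exp (-‖y‖ ^ 2) =
      Real.pi ^ (((Module.finrank ℝ E : ℝ) - 1) / 2) * Real.Gamma ((1 + a) / 2) := by
  have : Nontrivial E := ⟨e, 0, norm_ne_zero_iff.1 (he ▸ one_ne_zero)⟩
  let i₀ : Fin (Module.finrank ℝ E) := ⟨0, Module.finrank_pos⟩
  obtain ⟨b, hb⟩ : ∃ b : OrthonormalBasis (Fin (Module.finrank ℝ E)) ℝ E, b i₀ = e := by
    have horth : Orthonormal ℝ (({i₀} : Set _).domRestrict fun _ => e) :=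
      ⟨fun _ => he, fun i j hij => absurd (Subsingleton.elim i j) hij⟩
    obtain ⟨b, hb⟩ := horth.exists_orthonormalBasis_extension_of_card_eq (by simp)
    exact ⟨b, hb i₀ rfl⟩
  have hfactor (y : E) : |inner ℝ e y| ^ a * Real.exp (-‖y‖ ^ 2) =
      ∏ i, (fun t : ℝ => (if i = i₀ then |t| ^ a else 1) * Real.exp (-t ^ 2)) (b.repr y i) := by
    rw [Finset.prod_mul_distrib, ← Real.exp_sum, Finset.sum_neg_distrib,
      Finset.prod_ite_eq' Finset.univ i₀, if_pos (Finset.mem_univ _), ← b.repr.norm_map y,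
      EuclideanSpace.norm_sq_eq, b.repr_apply_apply, hb]
    simp only [Real.norm_eq_abs, sq_abs]
  have hgauss : ∫ t : ℝ, Real.exp (-t ^ 2) = √Real.pi := by
    simpa only [neg_mul, one_mul, div_one] using integral_gaussian 1
  have hmarginal (i : Fin (Module.finrank ℝ E)) :
      ∫ t : ℝ, (if i = i₀ then |t| ^ a else 1) * Real.exp (-t ^ 2) =
        if i = i₀ then Real.Gamma ((1 + a) / 2) else √Real.pi := by
    split_ifs
    · exact integral_abs_rpow_mul_exp_neg_sq ha
    · simpa only [one_mul] using hgauss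
  rw [integral_congr_ae (.of_forall hfactor), integral_prod_repr b
      fun i t => (if i = i₀ then |t| ^ a else 1) * Real.exp (-t ^ 2),
    Finset.prod_congr rfl fun i _ => hmarginal i,
    ← Finset.mul_prod_erase _ _ (Finset.mem_univ i₀), if_pos rfl, mul_comm,
    Finset.prod_congr rfl fun i hi => if_neg (Finset.ne_of_mem_erase hi), Finset.prod_const,
    Finset.card_erase_of_mem (Finset.mem_univ _), Finset.card_univ, Fintype.card_fin,
    Real.sqrt_eq_rpow, ← Real.rpow_mul_natCast Real.pi_pos.le, Nat.cast_pred Module.finrank_pos]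
  ring_nf

theorem lintegral_rpow_mul_exp_neg_sq {q : ℝ} (hq : -1 < q) :
    ∫⁻ r in Ioi (0 : ℝ), ENNReal.ofReal (r ^ q * Real.exp (-r ^ 2)) =
      ENNReal.ofReal (Real.Gamma ((q + 1) / 2) / 2) := by
  have hint := integral_rpow_mul_exp_neg_rpow two_pos hq
  simp only [Real.rpow_two] at hint
  have hΓ : 0 < Real.Gamma ((q + 1) / 2) := Real.Gamma_pos_of_pos (by linarith)
  rw [← ofReal_integral_eq_lintegral_ofReal, hint]
  · ring_nf
  · exact not_imp_comm.1 integral_undef (by rw [hint]; positivity)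
  · exact ae_restrict_of_forall_mem measurableSet_Ioi fun r hr =>
      mul_nonneg (Real.rpow_nonneg hr.out.le _) (Real.exp_pos _).le

/-- Compute the Gaussian moment in Cartesian and in polar coordinates. -/
theorem lintegral_toSphere_abs_inner_rpow {a : ℝ} (ha : -1 < a) {e : E} (he : ‖e‖ = 1) :
    ∫⁻ h, ENNReal.ofReal (|inner ℝ e (h : E)| ^ a) ∂(volume : Measure E).toSphere =
      ENNReal.ofReal (2 * (Real.pi ^ (((Module.finrank ℝ E : ℝ) - 1) / 2) *
        (Real.Gamma ((1 + a) / 2) / Real.Gamma ((Module.finrank ℝ E + a) / 2)))) := by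
  have : Nontrivial E := ⟨e, 0, norm_ne_zero_iff.1 (he ▸ one_ne_zero)⟩
  have hd : (1 : ℝ) ≤ Module.finrank ℝ E := by exact_mod_cast Module.finrank_pos (R := ℝ) (M := E)
  have hΓd : 0 < Real.Gamma ((Module.finrank ℝ E + a) / 2) := Real.Gamma_pos_of_pos (by linarith)
  have hΓ : 0 < Real.Gamma ((1 + a) / 2) := Real.Gamma_pos_of_pos (by linarith)
  have hcartesian := integral_abs_inner_rpow_mul_exp_neg_norm_sq ha he
  have hlint : ∫⁻ y : E, ENNReal.ofReal (|inner ℝ e y| ^ a * Real.exp (-‖y‖ ^ 2)) =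
      ENNReal.ofReal (Real.pi ^ (((Module.finrank ℝ E : ℝ) - 1) / 2) *
        Real.Gamma ((1 + a) / 2)) := by
    rw [← hcartesian, ofReal_integral_eq_lintegral_ofReal]
    · exact not_imp_comm.1 integral_undef (by rw [hcartesian]; positivity)
    · exact Eventually.of_forall fun y => by positivity
  have hpolar (h : sphere (0 : E) 1) : ∀ r ∈ Ioi (0 : ℝ),
      ENNReal.ofReal (r ^ (Module.finrank ℝ E - 1)) *
        ENNReal.ofReal (|inner ℝ e (r • (h : E))| ^ a * Real.exp (-‖r • (h : E)‖ ^ 2)) =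
      ENNReal.ofReal (|inner ℝ e (h : E)| ^ a) *
        ENNReal.ofReal (r ^ (Module.finrank ℝ E - 1 + a) * Real.exp (-r ^ 2)) := by
    intro r hr
    rw [← ENNReal.ofReal_mul (pow_nonneg hr.out.le _), ← ENNReal.ofReal_mul (by positivity),
      Real.rpow_add hr, ← Nat.cast_pred Module.finrank_pos, Real.rpow_natCast, inner_smul_right,
      norm_smul, norm_eq_of_mem_sphere, mul_one, Real.norm_of_nonneg hr.out.le, abs_mul,
      abs_of_pos hr.out, Real.mul_rpow hr.out.le (abs_nonneg _)]
    ring_nf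
  rw [lintegral_eq_lintegral_toSphere _ (by fun_prop),
    lintegral_congr fun h => setLIntegral_congr_fun measurableSet_Ioi (hpolar h)] at hlint
  simp_rw [lintegral_const_mul' _ _ ENNReal.ofReal_ne_top] at hlint
  rw [lintegral_rpow_mul_exp_neg_sq (by linarith), lintegral_mul_const' _ _ ENNReal.ofReal_ne_top,
    show (Module.finrank ℝ E - 1 + a + 1) / 2 = (Module.finrank ℝ E + a) / 2 by ring] at hlint
  rw [← ENNReal.mul_left_inj (ENNReal.ofReal_pos.2 (half_pos hΓd)).ne' ENNReal.ofReal_ne_top,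
    hlint, ← ENNReal.ofReal_mul (by positivity)]
  congr 1
  field_simp

end SphereMoment

section Fibre

variable {E : Type*} [NormedAddCommGroup E] [InnerProductSpace ℝ E] {α A : ℝ} {x : E}

/-- Half the length of the chord of the unit ball through `x` in the unit direction `h`; the
midpoint of the chord lies at signed distance `⟪x, h⟫` before `x`. -/
noncomputable def halfChord (x h : E) : ℝ :=
  √(1 - ‖x‖ ^ 2 + inner ℝ x h ^ 2)

/-- The pairs of points of the unit ball whose distance `d` in the Beltrami–Klein model of
hyperbolic space, where `cosh d = (1 - ⟪x, y⟫) / √((1 - ‖x‖²) (1 - ‖y‖²))`, satisfies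
`tanh d > 1 / A`. -/
def kleinFar (A : ℝ) : Set (E × E) :=
  {p | (1 - inner ℝ p.1 p.2) ^ 2 <
    A ^ 2 * ((1 - inner ℝ p.1 p.2) ^ 2 - (1 - ‖p.1‖ ^ 2) * (1 - ‖p.2‖ ^ 2))}

theorem measurableSet_kleinFar [MeasurableSpace E] [BorelSpace E] [SecondCountableTopology E] :
    MeasurableSet (kleinFar A : Set (E × E)) :=
  measurableSet_lt (by fun_prop) (by fun_prop)

theorem one_sub_norm_sq_pos {F : Type*} [SeminormedAddCommGroup F] {x : F}
    (hx : x ∈ ball (0 : F) 1) : 0 < 1 - ‖x‖ ^ 2 :=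
  sub_pos.2 (pow_lt_one₀ (norm_nonneg x) (mem_ball_zero_iff.1 hx) two_ne_zero)

theorem one_sub_norm_sq_mul_lt_one_sub_inner_sq {x y : E} (hx : x ∈ ball (0 : E) 1)
    (hxy : x ≠ y) : (1 - ‖x‖ ^ 2) * (1 - ‖y‖ ^ 2) < (1 - inner ℝ x y) ^ 2 := by
  have hD := one_sub_norm_sq_pos hx
  obtain ⟨z, rfl⟩ : ∃ z, y = x + z := ⟨y - x, (add_sub_cancel x y).symm⟩
  have hz : 0 < ‖z‖ ^ 2 := pow_pos (norm_pos_iff.2 fun hz => hxy (by rw [hz, add_zero])) 2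
  rw [norm_add_sq_real, inner_add_right, real_inner_self_eq_norm_sq]
  nlinarith [mul_pos hD hz, sq_nonneg (inner ℝ x z : ℝ)]

theorem halfChord_sq (hx : x ∈ ball (0 : E) 1) (h : E) :
    halfChord x h ^ 2 = 1 - ‖x‖ ^ 2 + inner ℝ x h ^ 2 :=
  Real.sq_sqrt (by nlinarith [one_sub_norm_sq_pos hx])

theorem abs_inner_lt_halfChord (hx : x ∈ ball (0 : E) 1) (h : E) :
    |inner ℝ x h| < halfChord x h :=
  Real.lt_sqrt_of_sq_lt (by linarith [sq_abs (inner ℝ x h), one_sub_norm_sq_pos hx])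

theorem halfChord_le_one {h : E} (hh : ‖h‖ = 1) : halfChord x h ≤ 1 := by
  have hinner := abs_real_inner_le_norm x h
  rw [hh, mul_one] at hinner
  exact Real.sqrt_le_one.2 (by linarith [sq_le_sq' (neg_le_of_abs_le hinner) (le_of_abs_le hinner)])

theorem one_sub_norm_add_smul_sq (hx : x ∈ ball (0 : E) 1) {h : E} (hh : ‖h‖ = 1) (r : ℝ) :
    1 - ‖x + r • h‖ ^ 2 = halfChord x h ^ 2 - (inner ℝ x h + r) ^ 2 := by
  rw [halfChord_sq hx, norm_add_sq_real, inner_smul_right, norm_smul, hh, Real.norm_eq_abs,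
    mul_one, sq_abs]
  ring

theorem add_smul_mem_kleinFar_iff (hx : x ∈ ball (0 : E) 1) (hA : 1 ≤ A) {h : E} (hh : ‖h‖ = 1)
    {r : ℝ} (hr : 0 < r) :
    x + r • h ∈ ball (0 : E) 1 ∩ Prod.mk x ⁻¹' kleinFar A ↔
      r ∈ truncChord (halfChord x h) (inner ℝ x h) A := by
  have hball : x + r • h ∈ ball (0 : E) 1 ↔ 0 < 1 - ‖x + r • h‖ ^ 2 := by
    rw [mem_ball_zero_iff, sub_pos, sq_lt_one_iff₀ (norm_nonneg _)]
  have hD : 1 - ‖x‖ ^ 2 = halfChord x h ^ 2 - inner ℝ x h ^ 2 := by rw [halfChord_sq hx]; ring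
  have hinner : 1 - inner ℝ x (x + r • h) =
      halfChord x h ^ 2 - inner ℝ x h ^ 2 - r * inner ℝ x h := by
    rw [inner_add_right, inner_smul_right, real_inner_self_eq_norm_sq, ← hD]
    ring
  rw [mem_truncChord_iff (abs_inner_lt_halfChord hx h) hA hr, mem_inter_iff, hball, mem_preimage,
    kleinFar, mem_ofPred_eq, hinner, hD, one_sub_norm_add_smul_sq hx hh]
  ring_nf

theorem abs_inner_direction_le_halfChord {e h : E} (hx : x ∈ ball (0 : E) 1) (he : ‖e‖ = 1)
    (hh : ‖h‖ = 1) (hxe : x = ‖x‖ • e) : |inner ℝ e h| ≤ halfChord x h := by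
  have hc : |inner ℝ e h| ≤ 1 := by simpa only [he, hh, mul_one] using abs_real_inner_le_norm e h
  have hinner : inner ℝ x h = ‖x‖ * inner ℝ e h := by
    conv_lhs => rw [hxe, inner_smul_left]
    rfl
  have hc_sq := sq_le_one_iff_abs_le_one _ |>.2 hc
  refine Real.le_sqrt_of_sq_le ?_
  rw [hinner, sq_abs, mul_pow]
  nlinarith [mul_nonneg (one_sub_norm_sq_pos hx).le (sub_nonneg.2 hc_sq)]

theorem chord_hardy_inequality {e h : E} (hα₁ : 1 < α) (hα₂ : α < 2) (hA : 1 ≤ A)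
    (hx : x ∈ ball (0 : E) 1) (he : ‖e‖ = 1) (hh : ‖h‖ = 1) (hxe : x = ‖x‖ • e) :
    (1 - ‖x‖ ^ 2) ^ (-((α - 1) / 2)) *
          (halfChord x h ^ α * (1 - ‖x‖ ^ 2) ^ (-((α + 1) / 2)) * truncMass α A) +
        (eulerBeta ((1 + α) / 2) ((2 - α) / 2) - 2 ^ α) / (2 * α) * (1 - ‖x‖ ^ 2) ^ (-α) *
          |inner ℝ e h| ^ α +
        (2 ^ α - 2) / (4 * α) * (1 - ‖x‖ ^ 2) ^ (-α + 1) ≤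
      (1 - ‖x‖ ^ 2) ^ (-α) / (2 * α) *
          (((A * halfChord x h + inner ℝ x h) ^ α - (halfChord x h + inner ℝ x h) ^ α) +
            ((A * halfChord x h - inner ℝ x h) ^ α - (halfChord x h - inner ℝ x h) ^ α)) +
        betaTail α A / (2 * α) * (1 - ‖x‖ ^ 2) ^ (-α) := by
  have hD := one_sub_norm_sq_pos hx
  have hτ := abs_inner_lt_halfChord hx h
  have hpair := chord_pair_inequality hα₁ hα₂ hA ((abs_nonneg _).trans_lt hτ)
    (halfChord_le_one hh) hτ.le (abs_inner_direction_le_halfChord hx he hh hxe)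
  rw [halfChord_sq hx, add_sub_cancel_right] at hpair
  have hscaled := mul_le_mul_of_nonneg_left hpair
    (show 0 ≤ (1 - ‖x‖ ^ 2) ^ (-α) / (2 * α) by positivity)
  have hpow : (1 - ‖x‖ ^ 2) ^ (-((α - 1) / 2)) * (1 - ‖x‖ ^ 2) ^ (-((α + 1) / 2)) =
      (1 - ‖x‖ ^ 2) ^ (-α) := by
    rw [← Real.rpow_add hD]
    ring_nf
  rw [Real.rpow_add_one hD.ne']
  calc _ = (1 - ‖x‖ ^ 2) ^ (-α) / (2 * α) * _ := ?_
    _ ≤ _ := hscaled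
    _ = _ := by ring
  rw [← hpow]
  field_simp
  ring

variable [FiniteDimensional ℝ E] [MeasurableSpace E] [BorelSpace E]

theorem lintegral_section_kleinFar [Nontrivial E] (hx : x ∈ ball (0 : E) 1) (hA : 1 ≤ A)
    {g : E → ℝ} (hg : Measurable g) :
    ∫⁻ y in ball 0 1 ∩ Prod.mk x ⁻¹' kleinFar A,
        ENNReal.ofReal (g y * (‖x - y‖ ^ (Module.finrank ℝ E + α))⁻¹) =
      ∫⁻ h, (∫⁻ r in truncChord (halfChord x h) (inner ℝ x h) A,
        ENNReal.ofReal (g (x + r • (h : E)) * r ^ (-1 - α))) ∂(volume : Measure E).toSphere := by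
  have hS : MeasurableSet (ball 0 1 ∩ Prod.mk x ⁻¹' kleinFar A) :=
    measurableSet_ball.inter (measurable_prodMk_left measurableSet_kleinFar)
  rw [← lintegral_indicator hS, ← lintegral_add_left_eq_self _ x,
    lintegral_eq_lintegral_toSphere _ (by fun_prop)]
  refine lintegral_congr fun h => ?_
  have hh := norm_eq_of_mem_sphere h
  have hsub := truncChord_subset_Ioi (abs_inner_lt_halfChord hx (h : E)) hA
  rw [← inter_eq_self_of_subset_left hsub, ← setLIntegral_indicator (by exact measurableSet_Ioo)]
  refine setLIntegral_congr_fun measurableSet_Ioi fun r hr => ?_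
  have hr : 0 < r := hr
  have hmem := add_smul_mem_kleinFar_iff hx hA hh hr
  by_cases hr_mem : r ∈ truncChord (halfChord x h) (inner ℝ x h) A
  · rw [indicator_of_mem hr_mem, indicator_of_mem (hmem.2 hr_mem),
      ← ENNReal.ofReal_mul (by positivity), sub_add_cancel_left, norm_neg, norm_smul, hh, mul_one,
      Real.norm_of_nonneg hr.le, ← Real.rpow_neg hr.le, ← Real.rpow_natCast,
      Nat.cast_pred Module.finrank_pos, mul_left_comm, ← Real.rpow_add hr]
    ring_nf
  · rw [indicator_of_notMem hr_mem, indicator_of_notMem (mt hmem.1 hr_mem), mul_zero]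

theorem lintegral_section_kleinFar_weight [Nontrivial E] (hα : 1 < α) (hA : 1 ≤ A)
    (hx : x ∈ ball (0 : E) 1) :
    ∫⁻ y in ball 0 1 ∩ Prod.mk x ⁻¹' kleinFar A, ENNReal.ofReal
        ((1 - ‖y‖ ^ 2) ^ ((α - 1) / 2) * (‖x - y‖ ^ (Module.finrank ℝ E + α))⁻¹) =
      ∫⁻ h, ENNReal.ofReal (halfChord x (h : E) ^ α * (1 - ‖x‖ ^ 2) ^ (-((α + 1) / 2)) *
        truncMass α A) ∂(volume : Measure E).toSphere := by
  rw [lintegral_section_kleinFar hx hA (by fun_prop)]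
  refine lintegral_congr fun h => ?_
  simp_rw [one_sub_norm_add_smul_sq hx (norm_eq_of_mem_sphere h)]
  rw [lintegral_truncChord_mul_rpow hα (abs_inner_lt_halfChord hx (h : E)) hA, halfChord_sq hx,
    add_sub_cancel_right]

/-- Average the chord integrals in the directions `h` and `-h`. -/
theorem lintegral_section_kleinFar_kernel [Nontrivial E] (hα : 0 < α) (hA : 1 ≤ A)
    (hx : x ∈ ball (0 : E) 1) :
    ∫⁻ y in ball 0 1 ∩ Prod.mk x ⁻¹' kleinFar A,
        ENNReal.ofReal (‖x - y‖ ^ (Module.finrank ℝ E + α))⁻¹ =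
      ∫⁻ h : sphere (0 : E) 1, ENNReal.ofReal ((1 - ‖x‖ ^ 2) ^ (-α) / (2 * α) *
        (((A * halfChord x h + inner ℝ x h) ^ α - (halfChord x h + inner ℝ x h) ^ α) +
          ((A * halfChord x h - inner ℝ x h) ^ α - (halfChord x h - inner ℝ x h) ^ α)))
        ∂(volume : Measure E).toSphere := by
  have hD := one_sub_norm_sq_pos hx
  have hnonneg (h : sphere (0 : E) 1) : 0 ≤ (1 - ‖x‖ ^ 2) ^ (-α) / α *
      ((A * halfChord x h + inner ℝ x h) ^ α - (halfChord x h + inner ℝ x h) ^ α) := by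
    have hτ := abs_inner_lt_halfChord hx (h : E)
    have hR := (abs_nonneg _).trans hτ.le
    have hnear : 0 ≤ halfChord x h + inner ℝ x h := by linarith [neg_lt_of_abs_lt hτ]
    refine mul_nonneg (by positivity) (sub_nonneg.2 ?_)
    have := le_mul_of_one_le_left hR hA
    gcongr
  have hmeas : Measurable fun h : sphere (0 : E) 1 => (1 - ‖x‖ ^ 2) ^ (-α) / α *
      ((A * halfChord x h + inner ℝ x h) ^ α - (halfChord x h + inner ℝ x h) ^ α) := by
    unfold halfChord
    fun_prop
  have hchord (h : sphere (0 : E) 1) :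
      ∫⁻ r in truncChord (halfChord x (h : E)) (inner ℝ x (h : E)) A,
          ENNReal.ofReal (r ^ (-1 - α)) = ENNReal.ofReal ((1 - ‖x‖ ^ 2) ^ (-α) / α *
        ((A * halfChord x h + inner ℝ x h) ^ α - (halfChord x h + inner ℝ x h) ^ α)) := by
    simpa only [halfChord_sq hx, add_sub_cancel_right] using
      lintegral_truncChord_rpow hα (abs_inner_lt_halfChord hx (h : E)) hA
  have hpolar := lintegral_section_kleinFar (α := α) hx hA (measurable_const (a := (1 : ℝ)))
  simp only [one_mul, hchord] at hpolar
  rw [hpolar, lintegral_toSphere_eq_lintegral_even_part _ hmeas hnonneg]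
  refine lintegral_congr fun h => congrArg ENNReal.ofReal ?_
  simp only [halfChord, coe_neg_sphere, inner_neg_right, neg_sq]
  ring_nf

variable (E) in
/-- The constant `c₃` obtained for the remainder term of the Hardy inequality on the unit ball
of `E`. -/
noncomputable def hardyRemainder (α : ℝ) : ℝ :=
  (2 ^ α - 2) / (4 * α) * (volume : Measure E).toSphere.real univ

theorem hardyRemainder_pos [Nontrivial E] (hα : 1 < α) : 0 < hardyRemainder E α := by
  have : NeZero (volume : Measure E).toSphere := ⟨Measure.toSphere_ne_zero _⟩
  exact mul_pos (div_pos (sub_pos.2 (two_lt_two_rpow hα)) (by positivity)) measureReal_univ_pos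

theorem kappa_nonneg (hα₁ : 1 ≤ α) (hα₂ : α < 2) (n : ℕ) : 0 ≤ kappa n α := by
  have hβ := sub_nonneg.2 (two_rpow_le_eulerBeta hα₁ hα₂)
  have : 0 ≤ Real.Gamma ((1 + α) / 2) / Real.Gamma ((n + α) / 2) :=
    div_nonneg (Real.Gamma_nonneg_of_nonneg (by positivity))
      (Real.Gamma_nonneg_of_nonneg (by positivity))
  unfold kappa
  positivity

theorem lintegral_moment_eq_kappa {e : E} (hα₁ : 1 ≤ α) (hα₂ : α < 2) (he : ‖e‖ = 1) {t : ℝ}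
    (ht : 0 ≤ t) :
    ∫⁻ h : sphere (0 : E) 1, ENNReal.ofReal
        ((eulerBeta ((1 + α) / 2) ((2 - α) / 2) - 2 ^ α) / (2 * α) * t * |inner ℝ e (h : E)| ^ α)
        ∂(volume : Measure E).toSphere =
      ENNReal.ofReal (2 ^ α * kappa (Module.finrank ℝ E) α * t) := by
  have hβ := sub_nonneg.2 (two_rpow_le_eulerBeta hα₁ hα₂)
  have hcoef : 0 ≤ (eulerBeta ((1 + α) / 2) ((2 - α) / 2) - 2 ^ α) / (2 * α) * t := by positivity
  simp_rw [ENNReal.ofReal_mul hcoef]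
  rw [lintegral_const_mul' _ _ ENNReal.ofReal_ne_top,
    lintegral_toSphere_abs_inner_rpow (by linarith) he, ← ENNReal.ofReal_mul hcoef, kappa]
  congr 1
  field_simp

theorem fibre_hardy_inequality [Nontrivial E] (hα₁ : 1 < α) (hα₂ : α < 2) (hA : 1 ≤ A)
    (hx : x ∈ ball (0 : E) 1) :
    ENNReal.ofReal ((1 - ‖x‖ ^ 2) ^ (-((α - 1) / 2))) *
          (∫⁻ y in ball 0 1 ∩ Prod.mk x ⁻¹' kleinFar A, ENNReal.ofReal
            ((1 - ‖y‖ ^ 2) ^ ((α - 1) / 2) * (‖x - y‖ ^ (Module.finrank ℝ E + α))⁻¹)) +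
        ENNReal.ofReal (2 ^ α * kappa (Module.finrank ℝ E) α * (1 - ‖x‖ ^ 2) ^ (-α)) +
        ENNReal.ofReal (hardyRemainder E α * (1 - ‖x‖ ^ 2) ^ (-α + 1)) ≤
      (∫⁻ y in ball 0 1 ∩ Prod.mk x ⁻¹' kleinFar A,
          ENNReal.ofReal (‖x - y‖ ^ (Module.finrank ℝ E + α))⁻¹) +
        ENNReal.ofReal (betaTail α A / (2 * α) * (volume : Measure E).toSphere.real univ *
          (1 - ‖x‖ ^ 2) ^ (-α)) := by
  have hD := one_sub_norm_sq_pos hx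
  have hα : 0 < α := by linarith
  obtain ⟨e, he, hxe⟩ : ∃ e : E, ‖e‖ = 1 ∧ x = ‖x‖ • e := by
    obtain rfl | hx₀ := eq_or_ne x 0
    · obtain ⟨e, he⟩ := exists_norm_eq E zero_le_one
      exact ⟨e, he, by rw [norm_zero, zero_smul]⟩
    · exact ⟨‖x‖⁻¹ • x, norm_smul_inv_norm hx₀, (smul_inv_smul₀ (norm_ne_zero_iff.2 hx₀) x).symm⟩
  have hconst {c t : ℝ} (hct : 0 ≤ c * t) :
      ENNReal.ofReal (c * (volume : Measure E).toSphere.real univ * t) =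
        ∫⁻ _, ENNReal.ofReal (c * t) ∂(volume : Measure E).toSphere := by
    rw [lintegral_const, ← ofReal_measureReal, ← ENNReal.ofReal_mul hct, mul_right_comm]
  have hβ := sub_nonneg.2 (two_rpow_le_eulerBeta hα₁.le hα₂)
  have hrem := (sub_pos.2 (two_lt_two_rpow hα₁)).le
  have htail := betaTail_nonneg hα₁.le hA
  have hmass := truncMass_nonneg (α := α) hA
  rw [lintegral_section_kleinFar_weight hα₁ hA hx, lintegral_section_kleinFar_kernel hα hA hx,
    ← lintegral_moment_eq_kappa hα₁.le hα₂ he (by positivity), hardyRemainder,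
    hconst (by positivity), hconst (by positivity),
    ← lintegral_const_mul' _ _ ENNReal.ofReal_ne_top, ← lintegral_add_right _ (by fun_prop),
    ← lintegral_add_right _ (by fun_prop), ← lintegral_add_right _ (by fun_prop)]
  refine lintegral_mono fun h => ?_
  have hR : 0 ≤ halfChord x (h : E) := Real.sqrt_nonneg _
  rw [← ENNReal.ofReal_mul (by positivity), ← ENNReal.ofReal_add (by positivity) (by positivity),
    ← ENNReal.ofReal_add (by positivity) (by positivity)]
  refine (ENNReal.ofReal_le_ofReal (chord_hardy_inequality hα₁ hα₂ hA hx he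
    (norm_eq_of_mem_sphere h) hxe)).trans ENNReal.ofReal_add_le

end Fibre

section GroundState

variable {X : Type*} [MeasurableSpace X]

theorem ofReal_groundState_identity {a b v₁ v₂ : ℝ} (hv₁ : 0 < v₁) (hv₂ : 0 < v₂) :
    ENNReal.ofReal ((a - b) ^ 2) +
        (ENNReal.ofReal (a ^ 2 / v₁ * v₂) + ENNReal.ofReal (b ^ 2 / v₂ * v₁)) =
      ENNReal.ofReal ((a / v₁ - b / v₂) ^ 2 * (v₁ * v₂)) +
        (ENNReal.ofReal (a ^ 2) + ENNReal.ofReal (b ^ 2)) := by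
  rw [← ENNReal.ofReal_add (by positivity) (by positivity),
    ← ENNReal.ofReal_add (by positivity) (by positivity),
    ← ENNReal.ofReal_add (by positivity) (by positivity),
    ← ENNReal.ofReal_add (by positivity) (by positivity)]
  congr 1
  field_simp
  ring

theorem lintegral_groundState_identity {ν : Measure (X × X)}
    (hν : MeasurePreserving Prod.swap ν ν) {u v : X → ℝ} (hu : Measurable u) (hv : Measurable v)
    (hpos : ∀ᵐ p ∂ν, 0 < v p.1 ∧ 0 < v p.2) :
    ∫⁻ p, ENNReal.ofReal ((u p.1 - u p.2) ^ 2) ∂ν +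
        2 * ∫⁻ p, ENNReal.ofReal (u p.1 ^ 2 / v p.1 * v p.2) ∂ν =
      ∫⁻ p, ENNReal.ofReal ((u p.1 / v p.1 - u p.2 / v p.2) ^ 2 * (v p.1 * v p.2)) ∂ν +
        2 * ∫⁻ p, ENNReal.ofReal (u p.1 ^ 2) ∂ν := by
  have hpotential : ∫⁻ p, ENNReal.ofReal (u p.2 ^ 2 / v p.2 * v p.1) ∂ν =
      ∫⁻ p, ENNReal.ofReal (u p.1 ^ 2 / v p.1 * v p.2) ∂ν :=
    hν.lintegral_comp (f := fun p => ENNReal.ofReal (u p.1 ^ 2 / v p.1 * v p.2)) (by fun_prop)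
  have hsquare : ∫⁻ p, ENNReal.ofReal (u p.2 ^ 2) ∂ν = ∫⁻ p, ENNReal.ofReal (u p.1 ^ 2) ∂ν :=
    hν.lintegral_comp (f := fun p => ENNReal.ofReal (u p.1 ^ 2)) (by fun_prop)
  have hpointwise : ∫⁻ p, _ ∂ν = ∫⁻ p, _ ∂ν := lintegral_congr_ae <| hpos.mono fun p hp =>
    ofReal_groundState_identity (a := u p.1) (b := u p.2) hp.1 hp.2
  rw [lintegral_add_left (by fun_prop), lintegral_add_left (by fun_prop),
    lintegral_add_left (by fun_prop), lintegral_add_left (by fun_prop), hpotential, hsquare,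
    ← two_mul, ← two_mul] at hpointwise
  exact hpointwise

end GroundState

section JumpMeasure

variable {E : Type*} [NormedAddCommGroup E] [InnerProductSpace ℝ E] [FiniteDimensional ℝ E]
  [MeasurableSpace E] [BorelSpace E] {α A : ℝ}

variable (E) in
/-- The measure `|x - y|^{-d - α} dx dy` on pairs of points of the unit ball of the
`d`-dimensional space `E`, so that `2 𝓔_B(u) = ∫ (u x - u y)²` against it. -/
noncomputable def ballJumpMeasure (α : ℝ) : Measure (E × E) :=
  ((volume.restrict (ball 0 1)).prod (volume.restrict (ball 0 1))).withDensity
    fun p => ENNReal.ofReal (‖p.1 - p.2‖ ^ (Module.finrank ℝ E + α))⁻¹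

theorem lintegral_ballJumpMeasure {F : E × E → ℝ≥0∞} (hF : Measurable F) :
    ∫⁻ p, F p ∂ballJumpMeasure E α = ∫⁻ x in ball 0 1, ∫⁻ y in ball 0 1,
      ENNReal.ofReal (‖x - y‖ ^ (Module.finrank ℝ E + α))⁻¹ * F (x, y) := by
  rw [ballJumpMeasure, lintegral_withDensity_eq_lintegral_mul _ (by fun_prop) hF,
    lintegral_prod _ (by fun_prop)]
  rfl

theorem setLIntegral_ballJumpMeasure {S : Set (E × E)} (hS : MeasurableSet S) {F : E × E → ℝ≥0∞}
    (hF : Measurable F) :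
    ∫⁻ p in S, F p ∂ballJumpMeasure E α = ∫⁻ x in ball 0 1, ∫⁻ y in ball 0 1 ∩ Prod.mk x ⁻¹' S,
      ENNReal.ofReal (‖x - y‖ ^ (Module.finrank ℝ E + α))⁻¹ * F (x, y) := by
  rw [← lintegral_indicator hS, lintegral_ballJumpMeasure (hF.indicator hS)]
  refine lintegral_congr fun x => ?_
  rw [inter_comm, ← setLIntegral_indicator (measurable_prodMk_left hS)]
  refine lintegral_congr fun y => ?_
  by_cases hy : (x, y) ∈ S
  · rw [indicator_of_mem hy, indicator_of_mem (mem_preimage.2 hy)]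
  · rw [indicator_of_notMem hy, indicator_of_notMem (mt mem_preimage.1 hy), mul_zero]

theorem measurePreserving_swap_ballJumpMeasure :
    MeasurePreserving Prod.swap (ballJumpMeasure E α) (ballJumpMeasure E α) := by
  refine ⟨measurable_swap, Measure.ext_of_lintegral _ fun F hF => ?_⟩
  rw [lintegral_map hF measurable_swap, ballJumpMeasure,
    lintegral_withDensity_eq_lintegral_mul _ (by fun_prop)
      (show Measurable fun p : E × E => F p.swap by fun_prop),
    lintegral_withDensity_eq_lintegral_mul _ (by fun_prop) hF, ← lintegral_prod_swap]
  refine lintegral_congr fun p => ?_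
  simp only [Pi.mul_apply, Prod.fst_swap, Prod.snd_swap, Prod.swap_swap, norm_sub_rev p.1]

theorem ae_mem_ball_ballJumpMeasure :
    ∀ᵐ p ∂ballJumpMeasure E α, p.1 ∈ ball (0 : E) 1 ∧ p.2 ∈ ball (0 : E) 1 := by
  refine (withDensity_absolutelyContinuous _ _).ae_le ?_
  rw [Measure.prod_restrict]
  exact ae_restrict_mem (measurableSet_ball.prod measurableSet_ball)

theorem ae_ne_ballJumpMeasure (hα : 0 < α) : ∀ᵐ p ∂ballJumpMeasure E α, p.1 ≠ p.2 := by
  refine (ae_withDensity_iff (by fun_prop)).2 (.of_forall fun p hdensity heq => hdensity ?_)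
  rw [heq, sub_self, norm_zero, Real.zero_rpow (by positivity), inv_zero, ENNReal.ofReal_zero]

theorem measurePreserving_swap_restrict_kleinFar :
    MeasurePreserving Prod.swap ((ballJumpMeasure E α).restrict (kleinFar A))
      ((ballJumpMeasure E α).restrict (kleinFar A)) := by
  have hsymm : Prod.swap ⁻¹' (kleinFar A : Set (E × E)) = kleinFar A := by
    ext p
    simp only [kleinFar, mem_preimage, mem_ofPred_eq, Prod.fst_swap, Prod.snd_swap,
      real_inner_comm p.1 p.2, mul_comm (1 - ‖p.2‖ ^ 2)]
  simpa only [hsymm] using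
    measurePreserving_swap_ballJumpMeasure.restrict_preimage
      (measurableSet_kleinFar (E := E) (A := A))

theorem aecover_kleinFar (hα : 0 < α) : AECover (ballJumpMeasure E α) atTop kleinFar where
  ae_eventually_mem := by
    filter_upwards [ae_mem_ball_ballJumpMeasure, ae_ne_ballJumpMeasure hα] with p hp hne
    have hgap := sub_pos.2 (one_sub_norm_sq_mul_lt_one_sub_inner_sq hp.1 hne)
    exact ((tendsto_pow_atTop two_ne_zero).atTop_mul_const hgap).eventually_gt_atTop _
  measurableSet _ := measurableSet_kleinFar

end JumpMeasure

section GroundStateWeight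

variable {E : Type*} [SeminormedAddCommGroup E] {α : ℝ}

/-- The ground state `(1 - ‖x‖²)^((α - 1) / 2)` of the unit ball, which is `w` on `ℝⁿ`. -/
noncomputable def ballWeight (α : ℝ) (x : E) : ℝ :=
  (1 - ‖x‖ ^ 2) ^ ((α - 1) / 2)

theorem measurable_ballWeight [MeasurableSpace E] [OpensMeasurableSpace E] :
    Measurable (ballWeight α : E → ℝ) := by
  unfold ballWeight
  fun_prop

theorem ballWeight_pos {x : E} (hx : x ∈ ball (0 : E) 1) : 0 < ballWeight α x :=
  Real.rpow_pos_of_pos (one_sub_norm_sq_pos hx) _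

end GroundStateWeight

section UnitBall

variable {E : Type*} [NormedAddCommGroup E] [InnerProductSpace ℝ E] [FiniteDimensional ℝ E]
  [MeasurableSpace E] [BorelSpace E] {α A : ℝ} {x : E} {u : E → ℝ}

theorem lintegral_section_kleinFar_kernel_le [Nontrivial E] (hα : 0 < α) (hA : 1 ≤ A)
    (hx : x ∈ ball (0 : E) 1) :
    ∫⁻ y in ball 0 1 ∩ Prod.mk x ⁻¹' kleinFar A,
        ENNReal.ofReal (‖x - y‖ ^ (Module.finrank ℝ E + α))⁻¹ ≤
      ENNReal.ofReal ((1 - ‖x‖ ^ 2) ^ (-α)) *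
        (ENNReal.ofReal ((2 * A) ^ α / α) * (volume : Measure E).toSphere univ) := by
  have hD := one_sub_norm_sq_pos hx
  rw [lintegral_section_kleinFar_kernel hα hA hx, ← mul_assoc,
    ← ENNReal.ofReal_mul (by positivity), ← lintegral_const]
  refine lintegral_mono fun h => ENNReal.ofReal_le_ofReal ?_
  have hR := halfChord_le_one (x := x) (norm_eq_of_mem_sphere h)
  have hτ := abs_lt.1 (abs_inner_lt_halfChord hx (h : E))
  have hfar {t : ℝ} (ht : -halfChord x (h : E) < t ∧ t < halfChord x (h : E)) :
      (A * halfChord x (h : E) + t) ^ α - (halfChord x (h : E) + t) ^ α ≤ (2 * A) ^ α := by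
    have : 0 ≤ (halfChord x (h : E) + t) ^ α := Real.rpow_nonneg (by linarith) _
    have : (A * halfChord x (h : E) + t) ^ α ≤ (2 * A) ^ α := by
      apply Real.rpow_le_rpow <;> nlinarith
    linarith
  have hpos := hfar hτ
  have hneg := hfar (t := -inner ℝ x (h : E)) ⟨by linarith, by linarith⟩
  simp only [← sub_eq_add_neg] at hneg
  calc _ ≤ (1 - ‖x‖ ^ 2) ^ (-α) / (2 * α) * ((2 * A) ^ α + (2 * A) ^ α) := by gcongr
    _ = _ := by field_simp; ring

/-- The weighted integral `∫_B u² (1 - |x|²)^a` over the unit ball, valued in `[0, ∞]`. -/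
noncomputable def weightedMass (a : ℝ) (u : E → ℝ) : ℝ≥0∞ :=
  ∫⁻ x in ball 0 1, ENNReal.ofReal (u x ^ 2 * (1 - ‖x‖ ^ 2) ^ a)

theorem setLIntegral_kleinFar_sq (hu : Measurable u) :
    ∫⁻ p in kleinFar A, ENNReal.ofReal (u p.1 ^ 2) ∂ballJumpMeasure E α =
      ∫⁻ x in ball 0 1, ENNReal.ofReal (u x ^ 2) *
        ∫⁻ y in ball 0 1 ∩ Prod.mk x ⁻¹' kleinFar A,
          ENNReal.ofReal (‖x - y‖ ^ (Module.finrank ℝ E + α))⁻¹ := by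
  rw [setLIntegral_ballJumpMeasure measurableSet_kleinFar (by fun_prop)]
  refine lintegral_congr fun x => ?_
  rw [← lintegral_const_mul' _ _ ENNReal.ofReal_ne_top]
  exact lintegral_congr fun y => mul_comm _ _

theorem setLIntegral_kleinFar_potential (hu : Measurable u) :
    ∫⁻ p in kleinFar A, ENNReal.ofReal (u p.1 ^ 2 / ballWeight α p.1 * ballWeight α p.2)
        ∂ballJumpMeasure E α =
      ∫⁻ x in ball 0 1, ENNReal.ofReal (u x ^ 2) *
        (ENNReal.ofReal ((1 - ‖x‖ ^ 2) ^ (-((α - 1) / 2))) *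
          ∫⁻ y in ball 0 1 ∩ Prod.mk x ⁻¹' kleinFar A, ENNReal.ofReal
            ((1 - ‖y‖ ^ 2) ^ ((α - 1) / 2) * (‖x - y‖ ^ (Module.finrank ℝ E + α))⁻¹)) := by
  unfold ballWeight
  rw [setLIntegral_ballJumpMeasure measurableSet_kleinFar (by fun_prop)]
  refine setLIntegral_congr_fun measurableSet_ball fun x hx => ?_
  have hD := one_sub_norm_sq_pos hx
  simp only
  rw [← lintegral_const_mul' _ _ ENNReal.ofReal_ne_top,
    ← lintegral_const_mul' _ _ ENNReal.ofReal_ne_top]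
  refine lintegral_congr fun y => ?_
  rw [← ENNReal.ofReal_mul (by positivity), ← ENNReal.ofReal_mul (by positivity),
    ← ENNReal.ofReal_mul (by positivity), Real.rpow_neg hD.le]
  ring_nf

theorem integrated_fibre_hardy_inequality [Nontrivial E] (hα₁ : 1 < α) (hα₂ : α < 2) (hA : 1 ≤ A)
    (hu : Measurable u) :
    ∫⁻ p in kleinFar A, ENNReal.ofReal (u p.1 ^ 2 / ballWeight α p.1 * ballWeight α p.2)
          ∂ballJumpMeasure E α +
        (ENNReal.ofReal (2 ^ α * kappa (Module.finrank ℝ E) α) * weightedMass (-α) u +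
          ENNReal.ofReal (hardyRemainder E α) * weightedMass (-α + 1) u) ≤
      ∫⁻ p in kleinFar A, ENNReal.ofReal (u p.1 ^ 2) ∂ballJumpMeasure E α +
        ENNReal.ofReal (betaTail α A / (2 * α) * (volume : Measure E).toSphere.real univ) *
          weightedMass (-α) u := by
  rw [setLIntegral_kleinFar_potential hu, setLIntegral_kleinFar_sq hu,
    weightedMass, weightedMass, ← lintegral_const_mul' _ _ ENNReal.ofReal_ne_top,
    ← lintegral_const_mul' _ _ ENNReal.ofReal_ne_top,
    ← lintegral_const_mul' _ _ ENNReal.ofReal_ne_top, ← lintegral_add_right _ (by fun_prop),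
    ← lintegral_add_right _ (by fun_prop), ← lintegral_add_right _ (by fun_prop)]
  refine setLIntegral_mono_ae' measurableSet_ball (.of_forall fun x hx => ?_)
  have hfactor {c t : ℝ} (hc : 0 ≤ c) : ENNReal.ofReal c * ENNReal.ofReal (u x ^ 2 * t) =
      ENNReal.ofReal (u x ^ 2) * ENNReal.ofReal (c * t) := by
    rw [← ENNReal.ofReal_mul hc, ← ENNReal.ofReal_mul (sq_nonneg _), mul_left_comm]
  have := betaTail_nonneg hα₁.le hA
  rw [hfactor (mul_nonneg (by positivity) (kappa_nonneg hα₁.le hα₂ _)),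
    hfactor (hardyRemainder_pos hα₁).le, hfactor (by positivity), ← mul_add, ← mul_add, ← mul_add,
    ← add_assoc]
  exact mul_le_mul_right (fibre_hardy_inequality hα₁ hα₂ hA hx) _

theorem setLIntegral_kleinFar_sq_ne_top [Nontrivial E] (hα : 0 < α) (hA : 1 ≤ A)
    (hu : Measurable u) (hmass : weightedMass (-α) u ≠ ∞) :
    ∫⁻ p in kleinFar A, ENNReal.ofReal (u p.1 ^ 2) ∂ballJumpMeasure E α ≠ ∞ := by
  have hC : ENNReal.ofReal ((2 * A) ^ α / α) * (volume : Measure E).toSphere univ ≠ ∞ := by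
    finiteness
  refine ne_top_of_le_ne_top (ENNReal.mul_ne_top hmass hC) ?_
  rw [setLIntegral_kleinFar_sq hu, weightedMass, ← lintegral_mul_const' _ _ hC]
  refine setLIntegral_mono_ae' measurableSet_ball (.of_forall fun x hx => ?_)
  rw [ENNReal.ofReal_mul (sq_nonneg _), mul_assoc]
  exact mul_le_mul_right (lintegral_section_kleinFar_kernel_le hα hA hx) _

theorem truncated_hardy_inequality [Nontrivial E] (hα₁ : 1 < α) (hα₂ : α < 2) (hA : 1 ≤ A)
    (hu : Measurable u) (hmass : weightedMass (-α) u ≠ ∞) :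
    ∫⁻ p in kleinFar A, ENNReal.ofReal
          ((u p.1 / ballWeight α p.1 - u p.2 / ballWeight α p.2) ^ 2 *
            (ballWeight α p.1 * ballWeight α p.2)) ∂ballJumpMeasure E α +
        2 * (ENNReal.ofReal (2 ^ α * kappa (Module.finrank ℝ E) α) * weightedMass (-α) u +
          ENNReal.ofReal (hardyRemainder E α) * weightedMass (-α + 1) u) ≤
      ∫⁻ p, ENNReal.ofReal ((u p.1 - u p.2) ^ 2) ∂ballJumpMeasure E α +
        2 * (ENNReal.ofReal (betaTail α A / (2 * α) * (volume : Measure E).toSphere.real univ) *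
          weightedMass (-α) u) := by
  have hground := lintegral_groundState_identity
    (measurePreserving_swap_restrict_kleinFar (A := A) (α := α)) hu
    (measurable_ballWeight (α := α)) (ae_restrict_of_ae (ae_mem_ball_ballJumpMeasure.mono
      fun p hp => ⟨ballWeight_pos hp.1, ballWeight_pos hp.2⟩))
  have hfibre := integrated_fibre_hardy_inequality hα₁ hα₂ hA hu
  have hfinite : 2 * ∫⁻ p in kleinFar A, ENNReal.ofReal (u p.1 ^ 2) ∂ballJumpMeasure E α ≠ ∞ :=
    ENNReal.mul_ne_top ENNReal.ofNat_ne_top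
      (setLIntegral_kleinFar_sq_ne_top (by linarith) hA hu hmass)
  refine (ENNReal.add_le_add_iff_right hfinite).1 ?_
  rw [add_right_comm, ← hground, add_assoc, ← mul_add, add_assoc, ← mul_add,
    add_comm (_ * weightedMass (-α) u) (lintegral _ _)]
  exact add_le_add (setLIntegral_le_lintegral _ _) (mul_le_mul_right hfibre 2)

theorem tendsto_truncation_error (hα₁ : 1 < α) (hα₂ : α < 2) (hmass : weightedMass (-α) u ≠ ∞) :
    Tendsto (fun A => ENNReal.ofReal
        (betaTail α A / (2 * α) * (volume : Measure E).toSphere.real univ) *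
      weightedMass (-α) u) atTop (𝓝 0) := by
  have hreal := ((tendsto_betaTail_atTop hα₁ hα₂).div_const (2 * α)).mul_const
    ((volume : Measure E).toSphere.real univ)
  rw [zero_div, zero_mul] at hreal
  simpa only [ENNReal.ofReal_zero, zero_mul] using
    ENNReal.Tendsto.mul_const (ENNReal.tendsto_ofReal hreal) (.inr hmass)

theorem lintegral_hardy_inequality [Nontrivial E] (hα₁ : 1 < α) (hα₂ : α < 2)
    (hu : Measurable u) (hmass : weightedMass (-α) u ≠ ∞) :
    ∫⁻ p, ENNReal.ofReal ((u p.1 / ballWeight α p.1 - u p.2 / ballWeight α p.2) ^ 2 *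
          (ballWeight α p.1 * ballWeight α p.2)) ∂ballJumpMeasure E α +
        2 * (ENNReal.ofReal (2 ^ α * kappa (Module.finrank ℝ E) α) * weightedMass (-α) u +
          ENNReal.ofReal (hardyRemainder E α) * weightedMass (-α + 1) u) ≤
      ∫⁻ p, ENNReal.ofReal ((u p.1 - u p.2) ^ 2) ∂ballJumpMeasure E α := by
  have hweight := measurable_ballWeight (E := E) (α := α)
  have hmeas : Measurable fun p : E × E => ENNReal.ofReal
      ((u p.1 / ballWeight α p.1 - u p.2 / ballWeight α p.2) ^ 2 *
        (ballWeight α p.1 * ballWeight α p.2)) := by fun_prop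
  have hleft := (aecover_kleinFar (by linarith)).lintegral_tendsto_of_countably_generated
    hmeas.aemeasurable
  have hright := (ENNReal.Tendsto.const_mul (tendsto_truncation_error (E := E) hα₁ hα₂ hmass)
    (.inr (ENNReal.ofNat_ne_top (n := 2)))).const_add
      (∫⁻ p, ENNReal.ofReal ((u p.1 - u p.2) ^ 2) ∂ballJumpMeasure E α)
  rw [mul_zero, add_zero] at hright
  exact le_of_tendsto_of_tendsto (hleft.add_const _) hright <|
    (eventually_ge_atTop 1).mono fun A hA => truncated_hardy_inequality hα₁ hα₂ hA hu hmass

end UnitBall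

section Integrability

variable {E : Type*} [NormedAddCommGroup E] [MeasurableSpace E] [OpensMeasurableSpace E]
  {μ : Measure E} {u : E → ℝ} {a b : ℝ}

theorem integrable_sq_mul_one_sub_norm_sq_rpow [IsFiniteMeasureOnCompacts μ] (a : ℝ)
    (hu : Continuous u) (hcompact : HasCompactSupport u) (hsupp : tsupport u ⊆ ball 0 1) :
    Integrable (fun x => u x ^ 2 * (1 - ‖x‖ ^ 2) ^ a) μ := by
  have hsub : Function.support (fun x => u x ^ 2 * (1 - ‖x‖ ^ 2) ^ a) ⊆ Function.support u :=
    fun x hx hux => hx (by simp only [hux, zero_pow two_ne_zero, zero_mul])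
  refine Continuous.integrable_of_hasCompactSupport (continuous_of_tsupport fun x hx => ?_)
    (hcompact.mono hsub)
  have hD := one_sub_norm_sq_pos (hsupp (closure_mono hsub hx))
  exact (hu.continuousAt.pow 2).mul (ContinuousAt.rpow_const (by fun_prop) (.inl hD.ne'))

theorem integrableOn_sq_mul_one_sub_norm_sq_rpow_of_le (hu : Measurable u) (hab : a ≤ b)
    (hint : IntegrableOn (fun x => u x ^ 2 * (1 - ‖x‖ ^ 2) ^ a) (ball 0 1) μ) :
    IntegrableOn (fun x => u x ^ 2 * (1 - ‖x‖ ^ 2) ^ b) (ball 0 1) μ := by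
  refine hint.mono' (by fun_prop)
    ((ae_restrict_iff' measurableSet_ball).2 (.of_forall fun x hx => ?_))
  have hD := one_sub_norm_sq_pos hx
  rw [Real.norm_of_nonneg (by positivity)]
  exact mul_le_mul_of_nonneg_left (Real.rpow_le_rpow_of_exponent_ge hD
    (sub_le_self _ (sq_nonneg _)) hab) (sq_nonneg _)

end Integrability

section General

variable {E : Type*} [NormedAddCommGroup E] [InnerProductSpace ℝ E] [FiniteDimensional ℝ E]
  [MeasurableSpace E] [BorelSpace E] {α a : ℝ} {u : E → ℝ}

theorem weightedMass_eq_ofReal_integral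
    (hint : IntegrableOn (fun x => u x ^ 2 * (1 - ‖x‖ ^ 2) ^ a) (ball 0 1)) :
    weightedMass a u = ENNReal.ofReal (∫ x in ball 0 1, u x ^ 2 * (1 - ‖x‖ ^ 2) ^ a) := by
  refine (ofReal_integral_eq_lintegral_ofReal hint
    ((ae_restrict_iff' measurableSet_ball).2 (.of_forall fun x hx => ?_))).symm
  have hD := one_sub_norm_sq_pos hx
  exact mul_nonneg (sq_nonneg _) (by positivity)

theorem lintegral_ofReal_ballJumpMeasure {F : E × E → ℝ} (hF : Measurable F) :
    ∫⁻ p, ENNReal.ofReal (F p) ∂ballJumpMeasure E α = ∫⁻ x in ball 0 1, ∫⁻ y in ball 0 1,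
      ENNReal.ofReal (F (x, y) / ‖x - y‖ ^ (Module.finrank ℝ E + α)) := by
  rw [lintegral_ballJumpMeasure hF.ennreal_ofReal]
  refine lintegral_congr fun x => lintegral_congr fun y => ?_
  rw [div_eq_inv_mul, ENNReal.ofReal_mul (by positivity)]

theorem hardy_with_remainder_ball_general [Nontrivial E] (hα₁ : 1 < α) (hα₂ : α < 2)
    (hu : Measurable u)
    (hint : IntegrableOn (fun x => u x ^ 2 * (1 - ‖x‖ ^ 2) ^ (-α)) (ball 0 1)) :
    (1 / 2) * (∫⁻ x in ball (0 : E) 1, ∫⁻ y in ball (0 : E) 1,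
          ENNReal.ofReal ((u x / ballWeight α x - u y / ballWeight α y) ^ 2 *
            (ballWeight α x * ballWeight α y) / ‖x - y‖ ^ (Module.finrank ℝ E + α))) +
        ENNReal.ofReal (2 ^ α * kappa (Module.finrank ℝ E) α *
          ∫ x in ball (0 : E) 1, u x ^ 2 * (1 - ‖x‖ ^ 2) ^ (-α)) +
        ENNReal.ofReal (hardyRemainder E α *
          ∫ x in ball (0 : E) 1, u x ^ 2 * (1 - ‖x‖ ^ 2) ^ (-α + 1)) ≤
      (1 / 2) * ∫⁻ x in ball (0 : E) 1, ∫⁻ y in ball (0 : E) 1,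
        ENNReal.ofReal ((u x - u y) ^ 2 / ‖x - y‖ ^ (Module.finrank ℝ E + α)) := by
  have hsharp : 0 ≤ 2 ^ α * kappa (Module.finrank ℝ E) α :=
    mul_nonneg (by positivity) (kappa_nonneg hα₁.le hα₂ _)
  have hmass := weightedMass_eq_ofReal_integral hint
  have hmass' := weightedMass_eq_ofReal_integral
    (integrableOn_sq_mul_one_sub_norm_sq_rpow_of_le hu (lt_add_one (-α)).le hint)
  have hweight := measurable_ballWeight (E := E) (α := α)
  have hmain := mul_le_mul_right
    (lintegral_hardy_inequality hα₁ hα₂ hu (hmass ▸ ENNReal.ofReal_ne_top)) (1 / 2 : ℝ≥0∞)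
  rw [mul_add, ← mul_assoc, one_div, ENNReal.inv_mul_cancel two_ne_zero ENNReal.ofNat_ne_top,
    one_mul, hmass, hmass', ← ENNReal.ofReal_mul hsharp,
    ← ENNReal.ofReal_mul (hardyRemainder_pos hα₁).le, ← add_assoc,
    lintegral_ofReal_ballJumpMeasure (by fun_prop),
    lintegral_ofReal_ballJumpMeasure (by fun_prop)] at hmain
  rwa [one_div]

end General

/-- Ground-state substitution Hardy inequality with remainder on the unit ball. -/
theorem hardy_with_remainder_ball (n : ℕ) (hn : 2 ≤ n) (α : ℝ)
    (hα1 : 1 < α) (hα2 : α < 2) :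
    ∃ c₃ : ℝ, 0 < c₃ ∧ ∀ u : EuclideanSpace ℝ (Fin n) → ℝ,
      Continuous u → HasCompactSupport u →
      tsupport u ⊆ ball (0 : EuclideanSpace ℝ (Fin n)) 1 →
      energy n α (ball 0 1) u ≥
        (1 / 2 : ℝ≥0∞) * (∫⁻ x in ball (0 : EuclideanSpace ℝ (Fin n)) 1,
            ∫⁻ y in ball (0 : EuclideanSpace ℝ (Fin n)) 1,
              ENNReal.ofReal ((u x / w n α x - u y / w n α y) ^ 2 *
                (w n α x * w n α y) / ‖x - y‖ ^ ((n : ℝ) + α))) +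
        ENNReal.ofReal ((2 : ℝ) ^ α * kappa n α *
          ∫ x in ball (0 : EuclideanSpace ℝ (Fin n)) 1,
            (u x) ^ 2 * (1 - ‖x‖ ^ 2) ^ (-α)) +
        ENNReal.ofReal (c₃ *
          ∫ x in ball (0 : EuclideanSpace ℝ (Fin n)) 1,
            (u x) ^ 2 * (1 - ‖x‖ ^ 2) ^ (-α + 1)) := by
  have : NeZero n := ⟨by omega⟩
  refine ⟨hardyRemainder (EuclideanSpace ℝ (Fin n)) α, hardyRemainder_pos hα1,
    fun u hu hcompact hsupp => ?_⟩
  simpa only [finrank_euclideanSpace_fin, ge_iff_le, energy, w, ballWeight] using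
    hardy_with_remainder_ball_general hα1 hα2 hu.measurable
      (integrable_sq_mul_one_sub_norm_sq_rpow (-α) hu hcompact hsupp).integrableOn
end
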